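/- arXiv:1808.01215 — 5 statements merged into one kernel-verified Lean document; each statement's English description precedes it below -/
import Mathlib

section
/- A finite simple graph G is word-representable if and only if G admits a semi-transitive orientation, i.e., an acyclic orientation of its edges such that for every directed path v_1 → v_2 → ⋯ → v_k, either the edge v_1 → v_k is absent, or the edge v_1 → v_k is present and all edges v_i → v_j for 1 ≤ i < j ≤ k are present. -/
/-!
For letters `x ≠ y` write `c_x(p)` for the number of occurrences of `x` in a prefix `p` of a
word. The letters alternate with `x` coming first iff `c_y(p) ≤ c_x(p) ≤ c_y(p) + 1` for every
prefix `p` (`Leads`, `alternate_iff`). Everything is done with these inequalities.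

*From words to orientations.* Orient an edge `xy` as `x → y` when `x` leads `y`. Along a directed
path the counts decrease weakly in every prefix, which gives acyclicity; if moreover
`v 0 → v k`, then all counts along the path lie between `c_{v k}` and `c_{v 0} ≤ c_{v k} + 1`,
so every earlier vertex of the path leads every later one.

*From orientations to words.* Call `h : V → ℕ` valid if `h b ≤ h a ≤ h b + 1` for each edge
`a → b`. In an acyclic orientation any valid vector can be raised one unit at a time to any
larger valid vector through valid vectors (`extend`). So there is a word all of whose prefixes
have valid count vectors and which passes through any prescribed finite list of valid vectors
with values at most `2`, up to adding constants (`exists_word`). It remains to find, for each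
ordered pair of distinct nonadjacent `x`, `y`, a valid vector violating `h y ≤ h x ≤ h y + 1`
(`exists_separating`). If `y` is not reachable from `x`, the indicator of the ancestors of `y`
works. Otherwise let `h v` be the least number of backward edges needed to travel from `y` to
`v`, truncated at `2`. Here `h y = 0`, and `h x = 2`: a single backward edge, from `b` to `a`, would
give `a ⇝ x ⇝ y ⇝ b` together with `a → b`, so `x → y` by semi-transitivity.
-/

/-- Letters `x` and `y` alternate in the word `w` if the subsequence of `w` consisting of
all occurrences of `x` and `y` has no two equal consecutive letters (i.e. is of the form
`xyxy⋯` or `yxyx⋯`). -/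
def Alternate {V : Type*} [DecidableEq V] (w : List V) (x y : V) : Prop :=
  (w.filter (fun z => decide (z = x ∨ z = y))).Chain' (· ≠ ·)

/-- A word `w` over `V` represents the simple graph `G` if it contains every letter of `V`
and distinct letters alternate in `w` iff they are adjacent in `G`. -/
def Represents {V : Type*} [DecidableEq V] (w : List V) (G : SimpleGraph V) : Prop :=
  (∀ v : V, v ∈ w) ∧ ∀ x y : V, x ≠ y → (Alternate w x y ↔ G.Adj x y)

/-- A graph is word-representable if some word represents it. -/
def WordRepresentable {V : Type*} [DecidableEq V] (G : SimpleGraph V) : Prop :=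
  ∃ w : List V, Represents w G

/-- An orientation of a simple graph `G`: each edge gets exactly one of its two directions. -/
structure GraphOrientation {V : Type*} (G : SimpleGraph V) where
  dir : V → V → Prop
  adj_iff : ∀ x y, G.Adj x y ↔ (dir x y ∨ dir y x)
  not_both : ∀ x y, ¬(dir x y ∧ dir y x)

/-- An orientation is acyclic if it has no directed cycle. -/
def GraphOrientation.Acyclic {V : Type*} {G : SimpleGraph V} (o : GraphOrientation G) : Prop :=
  ∀ v : V, ¬ Relation.TransGen o.dir v v

/-- An orientation has no shortcut of length `k` if for every directed path
`v 0 → v 1 → ⋯ → v k` (with `k` edges) such that the edge `v 0 → v k` is present,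
all edges `v i → v j` for `i < j` are present. -/
def GraphOrientation.NoShortcutOfLength {V : Type*} {G : SimpleGraph V}
    (o : GraphOrientation G) (k : ℕ) : Prop :=
  ∀ v : Fin (k + 1) → V,
    (∀ i : Fin k, o.dir (v i.castSucc) (v i.succ)) →
    o.dir (v 0) (v (Fin.last k)) →
    ∀ i j : Fin (k + 1), i < j → o.dir (v i) (v j)

/-- An orientation is semi-transitive if it has no shortcut of any length:
for every directed path `v_1 → ⋯ → v_k`, either the edge `v_1 → v_k` is absent, or it is
present and all edges `v_i → v_j` for `i < j` are present. -/
def GraphOrientation.SemiTransitive {V : Type*} {G : SimpleGraph V}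
    (o : GraphOrientation G) : Prop :=
  ∀ k : ℕ, o.NoShortcutOfLength k

/-! ### Alternation and prefix counts -/

/-- In every prefix of `w`, the letter `x` has occurred as often as `y` or once more. For
`x ≠ y` this says that `x` and `y` alternate in `w` and that `x` comes first. -/
def Leads {V : Type*} [DecidableEq V] (w : List V) (x y : V) : Prop :=
  ∀ p, p <+: w → p.count y ≤ p.count x ∧ p.count x ≤ p.count y + 1

/-- Prepending `y` to the `{x, y}`-subword of `w` forces that subword to start with `x`. -/
theorem leads_iff {V : Type*} [DecidableEq V] (w : List V) :
    ∀ x y : V, x ≠ y →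
      (Leads w x y ↔
        (y :: w.filter (fun z => decide (z = x ∨ z = y))).IsChain (· ≠ ·)) := by
  induction w with
  | nil => intro x y _; simp [Leads]
  | cons z w ih =>
    intro x y hxy
    by_cases hzx : z = x
    · subst hzx
      have key : Leads (z :: w) z y ↔ Leads w y z := by
        constructor
        · intro h p hp
          have := h (z :: p) (by simpa using hp)
          simp [hxy] at this
          omega
        · intro h p hp
          rcases List.prefix_cons_iff.1 hp with rfl | ⟨t, rfl, ht⟩
          · simp
          · have := h t ht
            simp [hxy]
            omega
      rw [key, ih y z hxy.symm]
      simp [List.isChain_cons_cons, hxy.symm, or_comm]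
    · by_cases hzy : z = y
      · subst hzy
        constructor
        · intro h
          have := h [z] (by simp)
          simp [hxy.symm] at this
        · intro h
          simp at h
      · have key : Leads (z :: w) x y ↔ Leads w x y := by
          constructor
          · intro h p hp
            have := h (z :: p) (by simpa using hp)
            simpa [List.count_cons, hzx, hzy] using this
          · intro h p hp
            rcases List.prefix_cons_iff.1 hp with rfl | ⟨t, rfl, ht⟩
            · simp
            · simpa [List.count_cons, hzx, hzy] using h t ht
        rw [key, ih x y hxy]
        simp [hzx, hzy]

theorem alternate_iff {V : Type*} [DecidableEq V] (w : List V) (x y : V) (hxy : x ≠ y) :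
    Alternate w x y ↔ Leads w x y ∨ Leads w y x := by
  have hcomm : (fun z => decide (z = y ∨ z = x)) = (fun z => decide (z = x ∨ z = y)) := by
    funext z; simp [or_comm]
  rw [leads_iff w x y hxy, leads_iff w y x hxy.symm, hcomm]
  unfold Alternate
  have hmem : ∀ z ∈ w.filter (fun z => decide (z = x ∨ z = y)), z = x ∨ z = y := by
    intro z hz; simpa using (List.mem_filter.1 hz).2
  generalize w.filter (fun z => decide (z = x ∨ z = y)) = f at hmem ⊢
  cases f with
  | nil => exact ⟨fun _ => Or.inl (by simp), fun _ => List.isChain_nil⟩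
  | cons a f =>
    rw [List.isChain_cons_cons, List.isChain_cons_cons]
    rcases hmem a (by simp) with rfl | rfl
    · constructor
      · intro h; exact Or.inl ⟨hxy.symm, h⟩
      · rintro (h | h) <;> exact h.2
    · constructor
      · intro h; exact Or.inr ⟨hxy, h⟩
      · rintro (h | h) <;> exact h.2

/-- Just after an occurrence of `x` the difference of the counts of `x` and `y` has changed. -/
theorem false_of_count_eq {V : Type*} [DecidableEq V] {w : List V} {x y : V} (hxy : x ≠ y)
    (hx : x ∈ w) (h : ∀ p, p <+: w → p.count x = p.count y) : False := by
  obtain ⟨s, t, rfl⟩ := List.append_of_mem hx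
  have h1 := h s (by simp)
  have h2 := h (s ++ [x]) (by simp)
  simp [List.count_append, hxy, h1] at h2

/-! ### From words to orientations -/

theorem exists_orientation_of_represents {V : Type*} [DecidableEq V] {G : SimpleGraph V}
    {w : List V} (hw : Represents w G) :
    ∃ o : GraphOrientation G, o.Acyclic ∧ o.SemiTransitive := by
  obtain ⟨hmem, hG⟩ := hw
  let o : GraphOrientation G :=
    { dir := fun x y => x ≠ y ∧ Leads w x y
      adj_iff := by
        intro x y
        by_cases hxy : x = y
        · subst hxy; simp
        · rw [← hG x y hxy, alternate_iff w x y hxy]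
          simp [hxy, Ne.symm hxy]
      not_both := by
        rintro x y ⟨⟨hxy, h1⟩, _, h2⟩
        exact false_of_count_eq hxy (hmem x)
          fun p hp => le_antisymm (h2 p hp).1 (h1 p hp).1 }
  have hmono : ∀ a b, Relation.ReflTransGen o.dir a b →
      ∀ p, p <+: w → p.count b ≤ p.count a := by
    intro a b h p hp
    induction h with
    | refl => exact le_rfl
    | tail _ hbc ih => exact ((hbc.2 p hp).1).trans ih
  have hac : o.Acyclic := by
    intro v hv
    obtain ⟨c, hvc, hcv⟩ := Relation.TransGen.head'_iff.1 hv
    exact false_of_count_eq hvc.1 (hmem v)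
      fun p hp => le_antisymm (hmono _ _ hcv p hp) (hvc.2 p hp).1
  refine ⟨o, hac, ?_⟩
  intro k v hpath hedge i j hij
  have hreach : ∀ n (hn : n < k + 1) m (hm : m ≤ n),
      Relation.ReflTransGen o.dir (v ⟨m, by omega⟩) (v ⟨n, hn⟩) := by
    intro n
    induction n with
    | zero =>
      intro hn m hm
      obtain rfl : m = 0 := by omega
      exact .refl
    | succ n ih =>
      intro hn m hm
      rcases Nat.lt_or_ge n m with h | h
      · obtain rfl : m = n + 1 := by omega
        exact .refl
      · exact (ih (by omega) m h).tail (hpath ⟨n, by omega⟩)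
  have h0i := hreach i i.2 0 (Nat.zero_le _)
  have hij' := hreach j j.2 i (le_of_lt hij)
  have hjk := hreach k (by omega) j (by omega)
  refine ⟨?_, fun p hp => ⟨hmono _ _ hij' p hp, ?_⟩⟩
  · intro heq
    -- A vertex repeated along the path would lie on a directed cycle.
    have h1 := hreach j j.2 (i + 1) hij
    have h2 : o.dir (v i) (v ⟨i + 1, by omega⟩) := hpath ⟨i, by omega⟩
    have h3 : Relation.TransGen o.dir (v i) (v j) := Relation.TransGen.head' h2 h1
    exact hac (v i) (by rw [← heq] at h3; exact h3)
  · have e1 := hmono _ _ h0i p hp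
    have e2 := hmono _ _ hjk p hp
    have e3 : p.count (v 0) ≤ p.count (v (Fin.last k)) + 1 := (hedge.2 p hp).2
    exact e1.trans (e3.trans (Nat.add_le_add_right e2 1))

/-! ### From orientations to words -/

/-- A vector of letter counts compatible with each tail of an edge leading its head. -/
def GraphOrientation.Valid {V : Type*} {G : SimpleGraph V} (o : GraphOrientation G)
    (h : V → ℕ) : Prop :=
  ∀ a b, o.dir a b → h b ≤ h a ∧ h a ≤ h b + 1

/-- All prefixes of `w` have valid count vectors, i.e. the tail of every edge leads its head. -/
def GraphOrientation.Good {V : Type*} [DecidableEq V] {G : SimpleGraph V}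
    (o : GraphOrientation G) (w : List V) : Prop :=
  ∀ p, p <+: w → o.Valid (fun v => p.count v)

/-- A good word can be prolonged, keeping it good, until its counts reach a given larger valid
vector. A next letter is found among those with count still too small: one of least count and,
among these, minimal for the orientation. Anything blocking this letter would precede it. -/
theorem GraphOrientation.extend {V : Type*} [Fintype V] [DecidableEq V] {G : SimpleGraph V}
    (o : GraphOrientation G) (hac : o.Acyclic) (h' : V → ℕ) (hv' : o.Valid h') :
    ∀ (n : ℕ) (w : List V), o.Good w → (∀ v, w.count v ≤ h' v) →
      ∑ v, (h' v - w.count v) = n →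
      ∃ w', w <+: w' ∧ o.Good w' ∧ ∀ v, w'.count v = h' v := by
  intro n
  induction n with
  | zero =>
    intro w hw hle hsum
    refine ⟨w, List.prefix_rfl, hw, fun v => ?_⟩
    have := (Finset.sum_eq_zero_iff.1 hsum) v (Finset.mem_univ v)
    have := hle v
    omega
  | succ n ih =>
    intro w hw hle hsum
    let R : V → V → Prop := fun a b => w.count a < w.count b ∨
      (w.count a = w.count b ∧ Relation.TransGen o.dir a b)
    have hRirr : Std.Irrefl R := ⟨by
      rintro a (h | ⟨_, h⟩)
      · exact lt_irrefl _ h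
      · exact hac a h⟩
    have hRtr : IsTrans V R := ⟨by
      rintro a b c (h1 | ⟨h1, h1'⟩) (h2 | ⟨h2, h2'⟩)
      · left; omega
      · left; omega
      · left; omega
      · right; exact ⟨h1.trans h2, h1'.trans h2'⟩⟩
    have hwf : WellFounded R := Finite.wellFounded_of_trans_of_irrefl R
    have hne : {v | w.count v < h' v}.Nonempty := by
      by_contra hcon
      rw [Set.not_nonempty_iff_eq_empty] at hcon
      have : ∑ v, (h' v - w.count v) = 0 := by
        refine Finset.sum_eq_zero fun v _ => ?_
        have : v ∉ {v | w.count v < h' v} := by rw [hcon]; simp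
        simp only [Set.mem_ofPred_eq] at this
        omega
      omega
    obtain ⟨v, hvS, hmin⟩ := hwf.has_min _ hne
    simp only [Set.mem_ofPred_eq] at hvS hmin
    have hcount : ∀ u, (w ++ [v]).count u = w.count u + if v = u then 1 else 0 := by
      intro u; simp [List.count_append, List.count_cons]
    have hvalid : o.Valid (fun u => (w ++ [v]).count u) := by
      intro a b hab
      have h0 := hw w List.prefix_rfl a b hab
      have h1 := hv' a b hab
      simp only [hcount] at h0 ⊢
      by_cases hva : v = a
      · subst hva
        have hvb : v ≠ b := by rintro rfl; exact hac _ (.single hab)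
        simp only [hvb, if_true, if_false]
        -- If `v → b` and `b` lags behind `v`, then `b` also has to be raised, and first.
        refine ⟨by omega, ?_⟩
        by_contra hcon
        exact hmin b (by omega) (Or.inl (by omega))
      · by_cases hvb : v = b
        · subst hvb
          simp only [hva, if_true, if_false]
          -- If `a → v` and `a` has the count of `v`, then `a` has to be raised before `v`.
          refine ⟨?_, by omega⟩
          by_contra hcon
          exact hmin a (by omega) (Or.inr ⟨by omega, .single hab⟩)
        · simp only [hva, hvb, if_false]
          omega
    have hgood : o.Good (w ++ [v]) := by
      intro p hp
      rcases List.prefix_concat_iff.1 hp with rfl | hp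
      · exact hvalid
      · exact hw p hp
    have hle2 : ∀ u, (w ++ [v]).count u ≤ h' u := by
      intro u
      rw [hcount]
      have := hle u
      split_ifs with huv
      · subst huv; omega
      · omega
    have hsum2 : ∑ u, (h' u - (w ++ [v]).count u) = n := by
      have : ∑ u, (h' u - w.count u) =
          ∑ u, (h' u - (w ++ [v]).count u) + ∑ u, (if v = u then 1 else 0) := by
        rw [← Finset.sum_add_distrib]
        refine Finset.sum_congr rfl fun u _ => ?_
        have := hle2 u
        rw [hcount] at this ⊢
        omega
      simp at this
      simp
      omega
    obtain ⟨w', hpre, hg, hc⟩ := ih (w ++ [v]) hgood hle2 hsum2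
    exact ⟨w', (List.prefix_append w [v]).trans hpre, hg, hc⟩

/-- A good word passing, up to additive constants, through all vectors of a given list. -/
theorem GraphOrientation.exists_word {V : Type*} [Fintype V] [DecidableEq V]
    {G : SimpleGraph V} (o : GraphOrientation G) (hac : o.Acyclic) (l : List (V → ℕ))
    (hl : ∀ h ∈ l, o.Valid h ∧ ∀ v, h v ≤ 2) :
    ∃ w : List V, o.Good w ∧ (∀ v, w.count v = 2 * l.length) ∧
      ∀ h ∈ l, ∃ p, p <+: w ∧ ∃ c, ∀ v, p.count v = c + h v := by
  induction l with
  | nil =>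
    refine ⟨[], ?_, by simp, by simp⟩
    intro p hp a b _
    simp [List.prefix_nil.1 hp]
  | cons h l ih =>
    obtain ⟨w, hg, hc, hp⟩ := ih fun g hgl => hl g (List.mem_cons_of_mem _ hgl)
    obtain ⟨hval, h2⟩ := hl h List.mem_cons_self
    obtain ⟨w1, hpre1, hg1, hc1⟩ := o.extend hac (fun v => 2 * l.length + h v)
      (fun a b hab => by have := hval a b hab; dsimp only; omega) _ w hg
      (fun v => by rw [hc]; omega) rfl
    obtain ⟨w2, hpre2, hg2, hc2⟩ := o.extend hac (fun _ => 2 * l.length + 2)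
      (fun a b hab => by dsimp only; omega) _ w1 hg1
      (fun v => by rw [hc1]; have := h2 v; omega) rfl
    refine ⟨w2, hg2, fun v => by rw [hc2]; simp; ring, ?_⟩
    intro g hgl
    rcases List.mem_cons.1 hgl with rfl | hgl
    · exact ⟨w1, hpre2, _, hc1⟩
    · obtain ⟨p, hpw, c, hpc⟩ := hp g hgl
      exact ⟨p, hpw.trans (hpre1.trans hpre2), c, hpc⟩

/-- A sequence starting at `b` can be prolonged backwards along a directed path from `a`. -/
theorem exists_path_prepend {V : Type*} {r : V → V → Prop} {a b : V}
    (h : Relation.ReflTransGen r a b) (v : ℕ → V) (hv : v 0 = b) :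
    ∃ (u : ℕ → V) (k : ℕ), u 0 = a ∧ (∀ n, u (k + n) = v n) ∧
      ∀ i < k, r (u i) (u (i + 1)) := by
  induction h using Relation.ReflTransGen.head_induction_on with
  | refl => exact ⟨v, 0, hv, by simp, by simp⟩
  | @head a c hac _ ih =>
    obtain ⟨u, k, hu0, huv, hr⟩ := ih
    refine ⟨fun n => Nat.casesOn n a u, k + 1, rfl, ?_, ?_⟩
    · intro n
      rw [show k + 1 + n = (k + n) + 1 by omega]
      exact huv n
    · intro i hi
      cases i with
      | zero => simpa [hu0] using hac
      | succ i => exact hr i (by omega)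

theorem GraphOrientation.SemiTransitive.dir_of_reach {V : Type*} {G : SimpleGraph V}
    {o : GraphOrientation G} (hst : o.SemiTransitive) {a x y b : V}
    (hax : Relation.ReflTransGen o.dir a x) (hxy : Relation.ReflTransGen o.dir x y)
    (hne : x ≠ y) (hyb : Relation.ReflTransGen o.dir y b) (hab : o.dir a b) :
    o.dir x y := by
  obtain ⟨u1, k1, h10, h1v, h1r⟩ := exists_path_prepend hyb (fun _ => b) rfl
  obtain ⟨u2, k2, h20, h2v, h2r⟩ := exists_path_prepend hxy u1 h10
  obtain ⟨u3, k3, h30, h3v, h3r⟩ := exists_path_prepend hax u2 h20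
  have hx : u3 k3 = x := by simpa [h20] using h3v 0
  have hy : u3 (k3 + k2) = y := by rw [h3v, ← h10]; simpa using h2v 0
  have hb : u3 (k3 + k2 + k1) = b := by
    rw [add_assoc, h3v, h2v]; simpa using h1v 0
  have hk2 : 0 < k2 := by
    rcases Nat.eq_zero_or_pos k2 with h | h
    · subst h; exact absurd (hx.symm.trans hy) hne
    · exact h
  have hpath : ∀ i < k3 + k2 + k1, o.dir (u3 i) (u3 (i + 1)) := by
    intro i hi
    rcases Nat.lt_or_ge i k3 with h | h
    · exact h3r i h
    · obtain ⟨j, rfl⟩ := Nat.exists_eq_add_of_le h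
      rw [add_assoc, h3v, h3v]
      rcases Nat.lt_or_ge j k2 with h' | h'
      · exact h2r j h'
      · obtain ⟨m, rfl⟩ := Nat.exists_eq_add_of_le h'
        rw [add_assoc, h2v, h2v]
        exact h1r m (by omega)
  have := hst (k3 + k2 + k1) (fun i => u3 i) (fun i => hpath i i.2)
    (by simpa [h30, hb] using hab) ⟨k3, by omega⟩ ⟨k3 + k2, by omega⟩
    (by simp [Fin.lt_def, hk2])
  simpa [hx, hy] using this

theorem GraphOrientation.exists_separating {V : Type*} {G : SimpleGraph V}
    (o : GraphOrientation G) (hac : o.Acyclic) (hst : o.SemiTransitive) (x y : V)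
    (hne : x ≠ y) (hxy : ¬ o.dir x y) :
    ∃ h : V → ℕ, o.Valid h ∧ (∀ v, h v ≤ 2) ∧ ¬ (h y ≤ h x ∧ h x ≤ h y + 1) := by
  classical
  by_cases hr : Relation.ReflTransGen o.dir x y
  · -- `P v`: the vertex `v` is reached from `y` using exactly one backward edge `b ← a`.
    let P : V → Prop := fun v => ∃ a b, o.dir a b ∧
      Relation.ReflTransGen o.dir y b ∧ Relation.ReflTransGen o.dir a v
    refine ⟨fun v => if Relation.ReflTransGen o.dir y v then 0 else if P v then 1 else 2,
      ?_, ?_, ?_⟩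
    · intro p q hpq
      have h1 : Relation.ReflTransGen o.dir y p → Relation.ReflTransGen o.dir y q :=
        fun h => h.tail hpq
      have h2 : P p → P q := fun ⟨a, b, hab, hb, ha⟩ => ⟨a, b, hab, hb, ha.tail hpq⟩
      have h3 : Relation.ReflTransGen o.dir y q → P p := fun h => ⟨p, q, hpq, h, .refl⟩
      clear_value P
      dsimp only
      constructor <;> split_ifs <;> first | omega | tauto
    · intro v
      dsimp only
      split_ifs <;> omega
    · have h1 : ¬ Relation.ReflTransGen o.dir y x := by
        intro h
        rcases Relation.reflTransGen_iff_eq_or_transGen.1 h with h' | h'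
        · exact hne h'
        · exact hac y (h'.trans_left hr)
      have h2 : ¬ P x := fun ⟨a, b, hab, hb, ha⟩ => hxy (hst.dir_of_reach ha hr hne hb hab)
      simp [h1, h2, Relation.ReflTransGen.refl]
  · refine ⟨fun v => if Relation.ReflTransGen o.dir v y then 1 else 0, ?_, ?_, ?_⟩
    · intro p q hpq
      have h1 : Relation.ReflTransGen o.dir q y → Relation.ReflTransGen o.dir p y :=
        fun h => h.head hpq
      dsimp only
      constructor <;> split_ifs <;> first | omega | tauto
    · intro v
      dsimp only
      split_ifs <;> omega
    · simp [hr, Relation.ReflTransGen.refl]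

theorem GraphOrientation.wordRepresentable {V : Type*} [Fintype V] [DecidableEq V]
    {G : SimpleGraph V} (o : GraphOrientation G) (hac : o.Acyclic) (hst : o.SemiTransitive) :
    WordRepresentable G := by
  classical
  have hex : ∀ q : V × V, ∃ h : V → ℕ, (o.Valid h ∧ ∀ v, h v ≤ 2) ∧
      (q.1 ≠ q.2 → ¬ o.dir q.1 q.2 → ¬ (h q.2 ≤ h q.1 ∧ h q.1 ≤ h q.2 + 1)) := by
    rintro ⟨x, y⟩
    by_cases hc : x ≠ y ∧ ¬ o.dir x y
    · obtain ⟨h, h1, h2, h3⟩ := o.exists_separating hac hst x y hc.1 hc.2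
      exact ⟨h, ⟨h1, h2⟩, fun _ _ => h3⟩
    · exact ⟨fun _ => 0, ⟨fun _ _ _ => by simp, by simp⟩,
        fun h1 h2 => absurd ⟨h1, h2⟩ hc⟩
  choose H hH hsep using hex
  obtain ⟨w, hg, hc, hp⟩ := o.exists_word hac ((Finset.univ : Finset (V × V)).toList.map H)
    (by
      intro h hh
      obtain ⟨q, _, rfl⟩ := List.mem_map.1 hh
      exact hH q)
  have hlead : ∀ x y, x ≠ y → (Leads w x y ↔ o.dir x y) := by
    intro x y hxy
    constructor
    · intro hl
      by_contra hnd
      obtain ⟨p, hpw, c, hpc⟩ := hp (H (x, y)) (List.mem_map.2 ⟨(x, y), by simp, rfl⟩)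
      have h1 := hl p hpw
      rw [hpc, hpc] at h1
      exact hsep (x, y) hxy hnd ⟨by dsimp only; omega, by dsimp only; omega⟩
    · intro hd p hpw
      exact hg p hpw x y hd
  refine ⟨w, ?_, ?_⟩
  · intro v
    rw [← List.count_pos_iff, hc]
    have : 0 < Fintype.card (V × V) := Fintype.card_pos_iff.2 ⟨(v, v)⟩
    simp only [List.length_map, Finset.length_toList, Finset.card_univ]
    omega
  · intro x y hxy
    rw [alternate_iff w x y hxy, hlead x y hxy, hlead y x hxy.symm, o.adj_iff]

/-- A finite simple graph is word-representable iff it admits a semi-transitive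
(acyclic) orientation. -/
theorem wordRepresentable_iff_semiTransitive {V : Type*} [Fintype V] [DecidableEq V]
    (G : SimpleGraph V) :
    WordRepresentable G ↔ ∃ o : GraphOrientation G, o.Acyclic ∧ o.SemiTransitive := by
  constructor
  · rintro ⟨w, hw⟩
    exact exists_orientation_of_represents hw
  · rintro ⟨o, hac, hst⟩
    exact o.wordRepresentable hac hst
end

section
/- Every 3-colorable finite simple graph is word-representable. -/
/-- Letters written at time `i`: all `z` with `t₁ z = i` or `t₂ z = i`, each once. -/
noncomputable def timeSlice {V : Type*} [Fintype V] (t₁ t₂ : V → ℕ) (i : ℕ) : List V :=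
  (Finset.univ : Finset V).toList.filter (fun z => decide (t₁ z = i ∨ t₂ z = i))

/-- The word in which each letter `z` is written at the times `t₁ z` and `t₂ z`; the times are
meant to be less than `100`, and later ones are ignored. -/
noncomputable def block {V : Type*} [Fintype V] (t₁ t₂ : V → ℕ) : List V :=
  (List.range' 0 100).flatMap (timeSlice t₁ t₂)

theorem filter_pair_of_nodup {V : Type*} [DecidableEq V] (l : List V) (hl : l.Nodup) (u v : V)
    (huv : ¬ (u ∈ l ∧ v ∈ l)) :
    l.filter (fun z => decide (z = u ∨ z = v)) =
      if u ∈ l then [u] else if v ∈ l then [v] else [] := by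
  have key : ∀ a : V, a ∈ l → l.filter (fun z => decide (z = a)) = [a] := by
    intro a ha
    have h := List.filter_eq (l := l) a
    rw [List.count_eq_one_of_mem hl ha] at h
    simpa [eq_comm] using h
  by_cases hu : u ∈ l
  · have hv : v ∉ l := fun h => huv ⟨hu, h⟩
    rw [if_pos hu, ← key u hu]
    apply List.filter_congr
    intro z hz
    have : z ≠ v := fun h => hv (h ▸ hz)
    simp [this]
  · by_cases hv : v ∈ l
    · rw [if_neg hu, if_pos hv, ← key v hv]
      apply List.filter_congr
      intro z hz
      have : z ≠ u := fun h => hu (h ▸ hz)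
      simp [this]
    · rw [if_neg hu, if_neg hv, List.filter_eq_nil_iff]
      intro z hz
      have h1 : z ≠ u := fun h => hu (h ▸ hz)
      have h2 : z ≠ v := fun h => hv (h ▸ hz)
      simp [h1, h2]

/-- Skips the empty slices before time `m`. -/
theorem flatMap_range'_step {α : Type*} (f : ℕ → List α) (a m k : ℕ) (ham : a ≤ m)
    (hm : m < a + k) (h0 : ∀ i, a ≤ i → i < m → f i = []) :
    (List.range' a k).flatMap f = f m ++ (List.range' (m + 1) (a + k - (m + 1))).flatMap f := by
  induction k generalizing a with
  | zero => omega
  | succ k ih =>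
    rw [List.range'_succ, List.flatMap_cons]
    rcases Nat.eq_or_lt_of_le ham with h | h
    · subst h
      congr 3
      omega
    · rw [h0 a le_rfl h, List.nil_append, ih (a + 1) h (by omega)
        (fun i hi hi' => h0 i (by omega) hi')]
      congr 3
      omega

theorem flatMap_range'_four {α : Type*} (f : ℕ → List α) (a b c d n : ℕ)
    (hab : a < b) (hbc : b < c) (hcd : c < d) (hd : d < n)
    (h0 : ∀ i, i ≠ a → i ≠ b → i ≠ c → i ≠ d → f i = []) :
    (List.range' 0 n).flatMap f = f a ++ (f b ++ (f c ++ f d)) := by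
  rw [flatMap_range'_step f 0 a n (by omega) (by omega)
      (fun i _ _ => h0 i (by omega) (by omega) (by omega) (by omega)),
    flatMap_range'_step f (a + 1) b _ (by omega) (by omega)
      (fun i _ _ => h0 i (by omega) (by omega) (by omega) (by omega)),
    flatMap_range'_step f (b + 1) c _ (by omega) (by omega)
      (fun i _ _ => h0 i (by omega) (by omega) (by omega) (by omega)),
    flatMap_range'_step f (c + 1) d _ (by omega) (by omega)
      (fun i _ _ => h0 i (by omega) (by omega) (by omega) (by omega))]
  have : (List.range' (d + 1) (c + 1 + (b + 1 + (a + 1 + (0 + n - (a + 1)) - (b + 1)) - (c + 1))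
      - (d + 1))).flatMap f = [] := by
    rw [List.flatMap_eq_nil_iff]
    intro i hi
    rw [List.mem_range'_1] at hi
    exact h0 i (by omega) (by omega) (by omega) (by omega)
  rw [this, List.append_nil]

/-- The restriction of a block to two letters whose four times are pairwise distinct. -/
theorem filter_block {V : Type*} [Fintype V] [DecidableEq V] (t₁ t₂ : V → ℕ) (u v : V)
    (h11 : t₁ u ≠ t₁ v) (h12 : t₁ u ≠ t₂ v) (h21 : t₂ u ≠ t₁ v) (h22 : t₂ u ≠ t₂ v) :
    (block t₁ t₂).filter (fun z => decide (z = u ∨ z = v)) =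
      (List.range' 0 100).flatMap (fun i => if t₁ u = i ∨ t₂ u = i then [u]
        else if t₁ v = i ∨ t₂ v = i then [v] else []) := by
  unfold block
  rw [List.filter_flatMap]
  congr 1
  funext i
  have hmem : ∀ z, z ∈ timeSlice t₁ t₂ i ↔ (t₁ z = i ∨ t₂ z = i) := by
    intro z; simp [timeSlice]
  rw [filter_pair_of_nodup (timeSlice t₁ t₂ i) ((Finset.nodup_toList _).filter _) u v
    (by rw [hmem, hmem]; omega)]
  simp only [hmem]

theorem mem_block {V : Type*} [Fintype V] (t₁ t₂ : V → ℕ) (z : V) (hz : t₁ z < 100) :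
    z ∈ block t₁ t₂ := by
  simp only [block, List.mem_flatMap, List.mem_range'_1]
  exact ⟨t₁ z, by omega, by simp [timeSlice]⟩

theorem filter_block_uvuv {V : Type*} [Fintype V] [DecidableEq V] (t₁ t₂ : V → ℕ) (u v : V)
    (h1 : t₁ u < t₁ v) (h2 : t₁ v < t₂ u) (h3 : t₂ u < t₂ v) (h4 : t₂ v < 100) :
    (block t₁ t₂).filter (fun z => decide (z = u ∨ z = v)) = [u, v, u, v] := by
  rw [filter_block _ _ _ _ (by omega) (by omega) (by omega) (by omega),
    flatMap_range'_four _ (t₁ u) (t₁ v) (t₂ u) (t₂ v) 100 h1 h2 h3 h4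
      (fun i _ _ _ _ => by rw [if_neg (by omega), if_neg (by omega)])]
  have e1 : ¬ (t₁ u = t₁ v ∨ t₂ u = t₁ v) := by omega
  have e2 : ¬ (t₁ u = t₂ v ∨ t₂ u = t₂ v) := by omega
  simp [e1, e2]

theorem filter_block_uvvu {V : Type*} [Fintype V] [DecidableEq V] (t₁ t₂ : V → ℕ) (u v : V)
    (h1 : t₁ u < t₁ v) (h2 : t₁ v < t₂ v) (h3 : t₂ v < t₂ u) (h4 : t₂ u < 100) :
    (block t₁ t₂).filter (fun z => decide (z = u ∨ z = v)) = [u, v, v, u] := by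
  rw [filter_block _ _ _ _ (by omega) (by omega) (by omega) (by omega),
    flatMap_range'_four _ (t₁ u) (t₁ v) (t₂ v) (t₂ u) 100 h1 h2 h3 h4
      (fun i _ _ _ _ => by rw [if_neg (by omega), if_neg (by omega)])]
  have e1 : ¬ (t₁ u = t₁ v ∨ t₂ u = t₁ v) := by omega
  have e2 : ¬ (t₁ u = t₂ v ∨ t₂ u = t₂ v) := by omega
  simp [e1, e2]

theorem filter_block_uuvv {V : Type*} [Fintype V] [DecidableEq V] (t₁ t₂ : V → ℕ) (u v : V)
    (h1 : t₁ u < t₂ u) (h2 : t₂ u < t₁ v) (h3 : t₁ v < t₂ v) (h4 : t₂ v < 100) :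
    (block t₁ t₂).filter (fun z => decide (z = u ∨ z = v)) = [u, u, v, v] := by
  rw [filter_block _ _ _ _ (by omega) (by omega) (by omega) (by omega),
    flatMap_range'_four _ (t₁ u) (t₂ u) (t₁ v) (t₂ v) 100 h1 h2 h3 h4
      (fun i _ _ _ _ => by rw [if_neg (by omega), if_neg (by omega)])]
  have e1 : ¬ (t₁ u = t₁ v ∨ t₂ u = t₁ v) := by omega
  have e2 : ¬ (t₁ u = t₂ v ∨ t₂ u = t₂ v) := by omega
  simp [e1, e2]

/-- Times making every edge alternate and the given nonadjacent pair restrict to `xyyx` or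
`xxyy`. -/
theorem exists_times {V : Type*} [DecidableEq V] (G : SimpleGraph V) (c : V → ℕ)
    (hc : ∀ v, c v < 3) (x y : V) (hxy : x ≠ y) (hadj : ¬ G.Adj x y) (hle : c x ≤ c y) :
    ∃ t₁ t₂ : V → ℕ,
      (∀ u v, G.Adj u v → c u < c v →
        t₁ u < t₁ v ∧ t₁ v < t₂ u ∧ t₂ u < t₂ v ∧ t₂ v < 100) ∧
      ((t₁ x < t₁ y ∧ t₁ y < t₂ y ∧ t₂ y < t₂ x ∧ t₂ x < 100) ∨
        (t₁ x < t₂ x ∧ t₂ x < t₁ y ∧ t₁ y < t₂ y ∧ t₂ y < 100)) := by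
  by_cases h1 : c y ≤ c x + 1
  · -- In the second permutation `x` is moved behind its colour class and `y` in front of its own,
    -- far enough for `y` to precede `x`; every other pair of different colours stays in the order
    -- of the colours.
    refine ⟨fun z => 4 * c z + if z = y then 1 else 0,
      fun z => 20 + 4 * c z + (if z = y then 2 else if z = x then 7 else 4), ?_, ?_⟩
    · intro u v huv hlt
      have hu := hc u
      have hv := hc v
      have hne : ¬ (u = x ∧ v = y) := by
        rintro ⟨rfl, rfl⟩
        exact hadj huv
      dsimp only
      split_ifs <;> first | omega | (exfalso; simp_all)
    · left
      have := hc y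
      simp only [if_true, if_neg hxy]
      omega
  · have hy2 : c y = 2 := by have := hc y; omega
    have hx0 : c x = 0 := by omega
    -- The times of `A B (C \ y) x y (A \ x) B C`.
    refine ⟨fun z => if z = y then 4 else c z, fun z => if z = x then 3 else 5 + c z, ?_, ?_⟩
    · intro u v huv hlt
      have hu := hc u
      have hv := hc v
      have hne : ¬ (u = x ∧ v = y) := by
        rintro ⟨rfl, rfl⟩
        exact hadj huv
      have huy : u ≠ y := by rintro rfl; omega
      have hvx : v ≠ x := by rintro rfl; omega
      simp only [if_neg huy, if_neg hvx]
      split_ifs <;> first | omega | (exfalso; simp_all)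
    · right
      simp only [if_true, if_neg hxy, if_neg hxy.symm]
      omega

theorem alternate_comm {V : Type*} [DecidableEq V] (w : List V) (x y : V) :
    Alternate w x y ↔ Alternate w y x := by
  unfold Alternate
  simp only [or_comm]

theorem isChain_flatten_replicate {V : Type*} (u v : V) (huv : u ≠ v) (k : ℕ) :
    ((List.replicate k [u, v]).flatten).IsChain (· ≠ ·) := by
  induction k with
  | zero => simp
  | succ k ih =>
    rw [List.replicate_succ, List.flatten_cons]
    cases k with
    | zero => simpa using huv
    | succ k =>
      rw [List.replicate_succ, List.flatten_cons] at ih ⊢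
      simp only [List.cons_append, List.nil_append] at ih ⊢
      exact List.IsChain.cons_cons huv (List.IsChain.cons_cons huv.symm ih)

theorem exists_filter_flatMap {V ι : Type*} [DecidableEq V] (l : List ι) (b : ι → List V)
    (u v : V)
    (h : ∀ i, ∃ k, (b i).filter (fun z => decide (z = u ∨ z = v)) =
      (List.replicate k [u, v]).flatten) :
    ∃ k, (l.flatMap b).filter (fun z => decide (z = u ∨ z = v)) =
      (List.replicate k [u, v]).flatten := by
  induction l with
  | nil => exact ⟨0, by simp⟩
  | cons i l ih =>
    obtain ⟨k₁, h₁⟩ := h i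
    obtain ⟨k₂, h₂⟩ := ih
    refine ⟨k₁ + k₂, ?_⟩
    rw [List.flatMap_cons, List.filter_append, h₁, h₂, List.replicate_add, List.flatten_append]

theorem Alternate.of_infix {V : Type*} [DecidableEq V] {w b : List V} {x y : V}
    (h : Alternate w x y) (hb : b <:+: w) : Alternate b x y :=
  List.IsChain.infix h (hb.filter _)

/-- Every 3-colorable finite simple graph is word-representable. -/
theorem wordRepresentable_of_three_colorable {V : Type*} [Fintype V] [DecidableEq V]
    (G : SimpleGraph V) (h : G.Colorable 3) : WordRepresentable G := by
  obtain ⟨C⟩ := h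
  let c : V → ℕ := fun v => (C v : ℕ)
  have hc : ∀ v, c v < 3 := fun v => (C v).isLt
  have hcne : ∀ u v, G.Adj u v → c u ≠ c v := fun u v huv heq => C.valid huv (Fin.ext heq)
  let Good : List V → Prop := fun b => ∀ u v, G.Adj u v → c u < c v →
    b.filter (fun z => decide (z = u ∨ z = v)) = [u, v, u, v]
  have hbase : Good (block c (fun z => 3 + c z)) := by
    intro u v _ hlt
    have := hc u
    have := hc v
    exact filter_block_uvuv _ _ _ _ hlt (by omega) (by omega) (by omega)
  have hex : ∀ p : V × V, ∃ b : List V, Good b ∧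
      (p.1 ≠ p.2 → ¬ G.Adj p.1 p.2 → c p.1 ≤ c p.2 → ¬ Alternate b p.1 p.2) := by
    rintro ⟨x, y⟩
    by_cases hp : x ≠ y ∧ ¬ G.Adj x y ∧ c x ≤ c y
    · obtain ⟨t₁, t₂, hE, hN⟩ := exists_times G c hc x y hp.1 hp.2.1 hp.2.2
      refine ⟨block t₁ t₂, ?_, fun _ _ _ => ?_⟩
      · intro u v huv hlt
        obtain ⟨h1, h2, h3, h4⟩ := hE u v huv hlt
        exact filter_block_uvuv _ _ _ _ h1 h2 h3 h4
      · unfold Alternate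
        rcases hN with ⟨h1, h2, h3, h4⟩ | ⟨h1, h2, h3, h4⟩
        · rw [filter_block_uvvu _ _ _ _ h1 h2 h3 h4]
          intro hh
          change List.IsChain (· ≠ ·) [x, y, y, x] at hh
          simp at hh
        · rw [filter_block_uuvv _ _ _ _ h1 h2 h3 h4]
          intro hh
          change List.IsChain (· ≠ ·) [x, x, y, y] at hh
          simp at hh
    · exact ⟨_, hbase, fun h1 h2 h3 => absurd ⟨h1, h2, h3⟩ hp⟩
  choose b hb hN using hex
  -- `none` contributes a block that guarantees that all letters occur.
  let b' : Option (V × V) → List V := fun o => o.elim (block c (fun z => 3 + c z)) b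
  have hb' : ∀ o, Good (b' o) := by
    rintro (_ | p)
    · exact hbase
    · exact hb p
  let w : List V := (Finset.univ : Finset (Option (V × V))).toList.flatMap b'
  have hinf : ∀ o, b' o <:+: w := fun o =>
    List.infix_of_mem_flatten (List.mem_map_of_mem (Finset.mem_toList.2 (Finset.mem_univ o)))
  have hedge : ∀ u v, G.Adj u v → c u < c v → Alternate w u v := by
    intro u v huv hlt
    obtain ⟨k, hk⟩ := exists_filter_flatMap (Finset.univ : Finset (Option (V × V))).toList b' u v
      (fun o => ⟨2, hb' o u v huv hlt⟩)
    unfold Alternate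
    rw [hk]
    exact isChain_flatten_replicate u v huv.ne k
  have hnon : ∀ x y, x ≠ y → ¬ G.Adj x y → c x ≤ c y → ¬ Alternate w x y :=
    fun x y h1 h2 h3 h4 => hN (x, y) h1 h2 h3 (h4.of_infix (hinf (some (x, y))))
  refine ⟨w, fun v => ?_, fun x y hxy => ⟨fun ha => ?_, fun ha => ?_⟩⟩
  · exact (hinf none).subset (mem_block _ _ v (by have := hc v; omega))
  · by_contra hna
    rcases le_total (c x) (c y) with hle | hle
    · exact hnon x y hxy hna hle ha
    · exact hnon y x hxy.symm (fun h => hna h.symm) hle ((alternate_comm w x y).1 ha)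
  · rcases lt_or_gt_of_ne (hcne x y ha) with hlt | hlt
    · exact hedge x y ha hlt
    · exact (alternate_comm w y x).1 (hedge y x ha.symm hlt)
end

section
/- A finite simple graph is permutationally representable if and only if it is a comparability graph. -/
/-- A graph is a comparability graph if it admits a transitive orientation. -/
def IsComparability {V : Type*} (G : SimpleGraph V) : Prop :=
  ∃ o : GraphOrientation G, ∀ x y z, o.dir x y → o.dir y z → o.dir x z

/-- A graph is permutationally representable if it is represented by a concatenation
`p_1 p_2 ⋯ p_k` (`k ≥ 1`) of permutations of its vertex set. -/
def PermutationallyRepresentable {V : Type*} [DecidableEq V] (G : SimpleGraph V) : Prop :=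
  ∃ ps : List (List V), ps ≠ [] ∧ (∀ p ∈ ps, p.Nodup ∧ ∀ v : V, v ∈ p) ∧
    Represents ps.flatten G

/-! ### Words that are concatenations of permutations -/

theorem filter_pair_of_idxOf_lt {V : Type*} [DecidableEq V] {p : List V} {x y : V}
    (hp : p.Nodup) (hy : y ∈ p) (h : p.idxOf x < p.idxOf y) :
    p.filter (fun z => decide (z = x ∨ z = y)) = [x, y] := by
  induction p with
  | nil => simp at hy
  | cons a t ih =>
    obtain ⟨ha, ht⟩ := List.nodup_cons.1 hp
    have hay : a ≠ y := by
      rintro rfl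
      simp at h
    have hyt : y ∈ t := by
      rcases List.mem_cons.1 hy with rfl | h'
      · exact absurd rfl hay
      · exact h'
    by_cases hax : a = x
    · subst hax
      have h1 : t.filter (fun z => decide (z = a ∨ z = y)) = t.filter (· == y) := by
        apply List.filter_congr
        intro z hz
        have : z ≠ a := fun e => ha (e ▸ hz)
        simp [this, beq_eq_decide]
      rw [List.filter_cons_of_pos (by simp), h1, List.filter_beq,
        List.count_eq_one_of_mem ht hyt]
      rfl
    · rw [List.idxOf_cons_ne _ hax, List.idxOf_cons_ne _ hay] at h
      rw [List.filter_cons_of_neg (by simp [hax, hay]), ih ht hyt (by omega)]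

/-- Concatenating blocks, each `xy` or `yx`, gives an alternating word only if every block
agrees with the first one. -/
theorem blocks_eq_of_isChain {V : Type*} {x y : V} (L : List (List V))
    (hL : ∀ l ∈ L, l = [x, y] ∨ l = [y, x])
    (hc : (([x, y] :: L).flatten).IsChain (· ≠ ·)) : ∀ l ∈ L, l = [x, y] := by
  induction L with
  | nil => simp
  | cons a t ih =>
    rcases hL a (by simp) with rfl | rfl
    · have := ih (fun l hl => hL l (by simp [hl])) (by
        simp only [List.flatten_cons, List.cons_append, List.nil_append] at hc ⊢
        exact hc.tail.tail)
      simpa using this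
    · simp at hc

theorem isChain_blocks {V : Type*} {x y : V} (hxy : x ≠ y) (L : List (List V))
    (hL : ∀ l ∈ L, l = [x, y]) : L.flatten.IsChain (· ≠ ·) := by
  induction L with
  | nil => simp
  | cons a t ih =>
    obtain rfl := hL a (by simp)
    have ht : ∀ l ∈ t, l = [x, y] := fun l hl => hL l (by simp [hl])
    have := ih ht
    cases t with
    | nil => simpa using hxy
    | cons b t =>
      obtain rfl := ht b (by simp)
      simp only [List.flatten_cons, List.cons_append, List.nil_append] at this ⊢
      exact List.IsChain.cons_cons hxy (List.IsChain.cons_cons hxy.symm this)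

/-- In a concatenation of permutations, two letters alternate exactly when they occur in the
same relative order in every permutation. -/
theorem alternate_flatten_iff {V : Type*} [DecidableEq V] {ps : List (List V)}
    (hps : ∀ p ∈ ps, p.Nodup ∧ ∀ v : V, v ∈ p) {x y : V} (hxy : x ≠ y) :
    Alternate ps.flatten x y ↔
      (∀ p ∈ ps, p.idxOf x < p.idxOf y) ∨ (∀ p ∈ ps, p.idxOf y < p.idxOf x) := by
  have key : ∀ p ∈ ps, (p.idxOf x < p.idxOf y ∧
        p.filter (fun z => decide (z = x ∨ z = y)) = [x, y]) ∨
      (p.idxOf y < p.idxOf x ∧ p.filter (fun z => decide (z = x ∨ z = y)) = [y, x]) := by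
    intro p hp
    obtain ⟨hn, hm⟩ := hps p hp
    rcases lt_trichotomy (p.idxOf x) (p.idxOf y) with h | h | h
    · exact Or.inl ⟨h, filter_pair_of_idxOf_lt hn (hm y) h⟩
    · exact absurd ((List.idxOf_inj (hm x)).1 h) hxy
    · refine Or.inr ⟨h, ?_⟩
      rw [← filter_pair_of_idxOf_lt hn (hm x) h]
      simp only [or_comm]
  have hiff : ∀ p ∈ ps, (p.filter (fun z => decide (z = x ∨ z = y)) = [x, y] ↔
        p.idxOf x < p.idxOf y) ∧ (p.filter (fun z => decide (z = x ∨ z = y)) = [y, x] ↔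
        p.idxOf y < p.idxOf x) := by
    intro p hp
    rcases key p hp with ⟨h, e⟩ | ⟨h, e⟩
    · rw [e]
      exact ⟨by simp [h], by simp [hxy, h.le]⟩
    · rw [e]
      exact ⟨by simp [hxy.symm, h.le], by simp [h]⟩
  unfold Alternate
  rw [List.filter_flatten]
  have hblocks : ∀ l ∈ ps.map (List.filter fun z => decide (z = x ∨ z = y)),
      l = [x, y] ∨ l = [y, x] := by
    intro l hl
    obtain ⟨p, hp, rfl⟩ := List.mem_map.1 hl
    exact (key p hp).imp And.right And.right
  constructor
  · intro hc
    cases ps with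
    | nil => simp
    | cons q t =>
      rw [List.map_cons] at hc hblocks
      have hq := key q (by simp)
      rcases hq with ⟨h, e⟩ | ⟨h, e⟩
      · left
        rw [e] at hc
        have := blocks_eq_of_isChain _ (fun l hl => hblocks l (List.mem_cons_of_mem _ hl)) hc
        intro p hp
        rcases List.mem_cons.1 hp with rfl | hp'
        · exact h
        · exact (hiff p hp).1.1 (this _ (List.mem_map_of_mem hp'))
      · right
        rw [e] at hc
        have := blocks_eq_of_isChain _ (fun l hl => (hblocks l (List.mem_cons_of_mem _ hl)).symm) hc
        intro p hp
        rcases List.mem_cons.1 hp with rfl | hp'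
        · exact h
        · exact (hiff p hp).2.1 (this _ (List.mem_map_of_mem hp'))
  · rintro (h | h)
    · refine isChain_blocks hxy _ fun l hl => ?_
      obtain ⟨p, hp, rfl⟩ := List.mem_map.1 hl
      exact (hiff p hp).1.2 (h p hp)
    · refine isChain_blocks hxy.symm _ fun l hl => ?_
      obtain ⟨p, hp, rfl⟩ := List.mem_map.1 hl
      exact (hiff p hp).2.2 (h p hp)

/-! ### Linear extensions as permutations -/

theorem exists_linear_extension_list {V : Type*} [Fintype V] [DecidableEq V]
    (r : V → V → Prop) (hr : IsPartialOrder V r) :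
    ∃ p : List V, (p.Nodup ∧ ∀ v : V, v ∈ p) ∧
      ∀ a b, r a b → a ≠ b → p.idxOf a < p.idxOf b := by
  classical
  obtain ⟨s, hs, hrs⟩ := extend_partialOrder r
  refine ⟨(Finset.univ : Finset V).sort s, ⟨Finset.sort_nodup _ _, by simp⟩, ?_⟩
  intro a b hab hne
  set p := (Finset.univ : Finset V).sort s with hp
  have ha : a ∈ p := by simp [hp]
  have hb : b ∈ p := by simp [hp]
  by_contra hlt
  have hlt' : p.idxOf b < p.idxOf a :=
    lt_of_le_of_ne (not_lt.1 hlt) fun e => hne ((List.idxOf_inj hb).1 e).symm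
  have hpw : p.Pairwise s := Finset.pairwise_sort _ _
  have hba := List.pairwise_iff_getElem.1 hpw _ _ (List.idxOf_lt_length_of_mem hb)
    (List.idxOf_lt_length_of_mem ha) hlt'
  simp only [List.getElem_idxOf] at hba
  exact hne (antisymm_of s (hrs _ _ hab) hba)

/-- If `x ≠ y` and `y` is not below `x` in a strict order `d`, some linear extension puts `x` before
`y`: the relation obtained by placing everything weakly below `x` under everything weakly
above `y` is still a partial order, and it can be extended to a linear one. -/
theorem exists_extension_pair {V : Type*} [Fintype V] [DecidableEq V] (d : V → V → Prop)
    (hirr : ∀ a, ¬ d a a) (htr : ∀ a b c, d a b → d b c → d a c) (x y : V)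
    (hyx : ¬ d y x) (hxy : x ≠ y) :
    ∃ p : List V, (p.Nodup ∧ ∀ v : V, v ∈ p) ∧
      (∀ a b, d a b → p.idxOf a < p.idxOf b) ∧ p.idxOf x < p.idxOf y := by
  obtain ⟨p, hp, h⟩ := exists_linear_extension_list
    (fun a b => a = b ∨ d a b ∨ ((a = x ∨ d a x) ∧ (y = b ∨ d y b)))
    { refl := fun a => Or.inl rfl
      trans := by
        intro a b c
        grind
      antisymm := by
        intro a b
        grind }
  refine ⟨p, hp, fun a b hab => h a b (by simp [hab]) ?_, h x y (by simp) hxy⟩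
  rintro rfl
  exact hirr _ hab

/-- A finite simple graph is permutationally representable iff it is a comparability
graph. -/
theorem permutationallyRepresentable_iff_isComparability {V : Type*} [Fintype V]
    [DecidableEq V] (G : SimpleGraph V) :
    PermutationallyRepresentable G ↔ IsComparability G := by
  constructor
  · rintro ⟨ps, hne, hps, -, hrep⟩
    obtain ⟨q, hq⟩ := List.exists_mem_of_ne_nil ps hne
    refine ⟨⟨fun x y => ∀ p ∈ ps, p.idxOf x < p.idxOf y, fun x y => ?_, fun x y h => ?_⟩,
      fun x y z hxy hyz p hp => (hxy p hp).trans (hyz p hp)⟩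
    · by_cases hxy : x = y
      · subst hxy
        simp only [SimpleGraph.irrefl, or_self, false_iff]
        exact fun h => lt_irrefl _ (h q hq)
      · rw [← hrep x y hxy, alternate_flatten_iff hps hxy]
    · exact lt_asymm (h.1 q hq) (h.2 q hq)
  · rintro ⟨o, htr⟩
    have hirr : ∀ a, ¬ o.dir a a := fun a h => o.not_both a a ⟨h, h⟩
    obtain ⟨p₀, hp₀, h₀⟩ := exists_linear_extension_list (fun a b => a = b ∨ o.dir a b)
      { refl := fun a => Or.inl rfl
        trans := by
          intro a b c
          grind
        antisymm := by
          intro a b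
          grind }
    have h₀' : ∀ a b, o.dir a b → p₀.idxOf a < p₀.idxOf b := fun a b hab =>
      h₀ a b (Or.inr hab) fun e => hirr b (e ▸ hab)
    have hex : ∀ t : V × V, ∃ p : List V, (p.Nodup ∧ ∀ v : V, v ∈ p) ∧
        (∀ a b, o.dir a b → p.idxOf a < p.idxOf b) ∧
        (¬ o.dir t.2 t.1 → t.1 ≠ t.2 → p.idxOf t.1 < p.idxOf t.2) := by
      intro t
      by_cases h : ¬ o.dir t.2 t.1 ∧ t.1 ≠ t.2
      · obtain ⟨p, hp, h1, h2⟩ := exists_extension_pair o.dir hirr htr t.1 t.2 h.1 h.2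
        exact ⟨p, hp, h1, fun _ _ => h2⟩
      · exact ⟨p₀, hp₀, h₀', fun h1 h2 => absurd ⟨h1, h2⟩ h⟩
    choose f hf hext hsep using hex
    -- The extra `p₀` keeps the list of permutations nonempty when `V` is empty.
    have hps : ∀ p ∈ p₀ :: (Finset.univ : Finset (V × V)).toList.map f,
        (p.Nodup ∧ ∀ v : V, v ∈ p) ∧ ∀ a b, o.dir a b → p.idxOf a < p.idxOf b := by
      intro p hp
      rcases List.mem_cons.1 hp with rfl | hp
      · exact ⟨hp₀, h₀'⟩
      · obtain ⟨t, -, rfl⟩ := List.mem_map.1 hp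
        exact ⟨hf t, hext t⟩
    have hmem : ∀ t, f t ∈ p₀ :: (Finset.univ : Finset (V × V)).toList.map f := fun t =>
      List.mem_cons_of_mem _ (List.mem_map_of_mem (by simp))
    refine ⟨_, List.cons_ne_nil _ _, fun p hp => (hps p hp).1, fun v => ?_, fun x y hxy => ?_⟩
    · exact List.mem_flatten.2 ⟨p₀, List.mem_cons_self, hp₀.2 v⟩
    · rw [alternate_flatten_iff (fun p hp => (hps p hp).1) hxy, o.adj_iff]
      refine or_congr ⟨fun h => ?_, fun h p hp => (hps p hp).2 _ _ h⟩
        ⟨fun h => ?_, fun h p hp => (hps p hp).2 _ _ h⟩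
      -- If `x → y` fails, the extension chosen for `(y, x)` puts `y` before `x`.
      · by_contra hd
        exact lt_asymm (h _ (hmem (y, x))) (hsep (y, x) hd hxy.symm)
      · by_contra hd
        exact lt_asymm (h _ (hmem (x, y))) (hsep (x, y) hd hxy)
end

section
/- A finite simple graph is word-representable if and only if it is k-representable for some positive integer k, i.e., if and only if it can be represented by a word in which every letter occurs exactly k times. -/
/-- A graph is `k`-representable if some `k`-uniform word (every letter occurring
exactly `k` times) represents it. -/
def KRepresentable {V : Type*} [DecidableEq V] (G : SimpleGraph V) (k : ℕ) : Prop :=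
  ∃ w : List V, (∀ v : V, w.count v = k) ∧ Represents w G

/-- An alternating word over `{x, y}` ending in `x` has as many letters `x` as `y`, with one more
`x` if it also begins with `x`. -/
theorem count_eq_of_isChain {V : Type*} [DecidableEq V] {x y : V} (hxy : x ≠ y) :
    ∀ l : List V, l.IsChain (· ≠ ·) → (∀ z ∈ l, z = x ∨ z = y) → l.getLast? = some x →
      l.count x = l.count y + if l.head? = some x then 1 else 0
  | [], _, _, h => by simp at h
  | [a], _, _, h => by
    have : a = x := by simpa using h
    subst this
    simp [hxy]
  | a :: b :: l, hc, hm, h => by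
    rw [List.isChain_cons_cons] at hc
    have ih := count_eq_of_isChain hxy (b :: l) hc.2 (fun z hz => hm z (List.mem_cons_of_mem _ hz))
      (by simpa using h)
    have ha := hm a (by simp)
    have hb := hm b (by simp)
    have hab := hc.1
    have hyx := hxy.symm
    rw [List.count_cons (l := b :: l), List.count_cons (l := b :: l), ih]
    rcases ha with rfl | rfl <;> rcases hb with rfl | rfl <;> simp_all

theorem filter_dedup {V : Type*} [DecidableEq V] (p : V → Bool) (w : List V) :
    w.dedup.filter p = (w.filter p).dedup := by
  induction w with
  | nil => simp
  | cons a l ih =>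
    by_cases h : a ∈ l <;> by_cases hp : p a <;>
      simp [List.dedup_cons_of_mem, List.dedup_cons_of_notMem, h, hp, ih]

theorem getLast?_dedup {V : Type*} [DecidableEq V] (w : List V) :
    w.dedup.getLast? = w.getLast? := by
  induction w with
  | nil => simp
  | cons a l ih =>
    by_cases h : a ∈ l
    · have : l ≠ [] := List.ne_nil_of_mem h
      rw [List.dedup_cons_of_mem h, ih]
      simp [List.getLast?_cons, List.getLast?_eq_some_getLast this]
    · rw [List.dedup_cons_of_notMem h, List.getLast?_cons, List.getLast?_cons, ih]

/-- The word `w` followed by those of its letters that occur fewer than `k` times, in the order of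
their last occurrences. -/
def pad {V : Type*} [DecidableEq V] (k : ℕ) (w : List V) : List V :=
  w ++ w.dedup.filter (fun v => decide (w.count v < k))

theorem count_pad {V : Type*} [DecidableEq V] (k : ℕ) (w : List V) (v : V) (hv : v ∈ w) :
    (pad k w).count v = w.count v + if w.count v < k then 1 else 0 := by
  rw [pad, List.count_append]
  split_ifs with h
  · rw [List.count_filter (by simpa using h),
      List.count_eq_one_of_mem (List.nodup_dedup w) (List.mem_dedup.2 hv)]
  · rw [List.count_eq_zero_of_not_mem (l := List.filter _ _) (by simp [h])]

theorem alternate_pad {V : Type*} [DecidableEq V] {k : ℕ} {w : List V} {x y : V}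
    (hxy : x ≠ y) (hx : x ∈ w) (hy : y ∈ w) :
    Alternate (pad k w) x y ↔ Alternate w x y := by
  unfold Alternate pad
  rw [List.filter_append, List.filter_comm, filter_dedup]
  have hcx : (w.filter fun z => decide (z = x ∨ z = y)).count x = w.count x :=
    List.count_filter (by simp)
  have hcy : (w.filter fun z => decide (z = x ∨ z = y)).count y = w.count y :=
    List.count_filter (by simp)
  have hm : ∀ z ∈ w.filter (fun z => decide (z = x ∨ z = y)), z = x ∨ z = y := by
    intro z hz
    simpa using (List.mem_filter.1 hz).2
  have hxu : x ∈ w.filter (fun z => decide (z = x ∨ z = y)) := by simp [hx]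
  have hyu : y ∈ w.filter (fun z => decide (z = x ∨ z = y)) := by simp [hy]
  generalize w.filter (fun z => decide (z = x ∨ z = y)) = u at *
  refine ⟨fun h => (List.isChain_append.1 h).1, fun h => ?_⟩
  refine List.isChain_append.2
    ⟨h, (((List.nodup_dedup u).filter _).isChain), ?_⟩
  rintro a ha b hb rfl
  simp only [Option.mem_def] at ha hb
  have hbm := List.mem_filter.1 (List.mem_of_mem_head? hb)
  have hak : w.count a < k := by simpa using hbm.2
  -- The letter `c` is the other element of `{x, y}`.
  obtain ⟨c, hac, hcu, hmem, hca, hcc⟩ : ∃ c, a ≠ c ∧ c ∈ u ∧ (∀ z ∈ u, z = a ∨ z = c) ∧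
      u.count a = w.count a ∧ u.count c = w.count c := by
    rcases hm a (List.mem_of_getLast? ha) with rfl | rfl
    · exact ⟨y, hxy, hyu, hm, hcx, hcy⟩
    · exact ⟨x, hxy.symm, hxu, fun z hz => (hm z hz).symm, hcy, hcx⟩
  have hcount := count_eq_of_isChain hac u h hmem ha
  -- Since `u` ends in `a`, the letter `c` does not occur more often than `a`, so both are appended.
  have hck : w.count c < k := by omega
  have hall : u.dedup.filter (fun v => decide (w.count v < k)) = u.dedup := by
    rw [List.filter_eq_self]
    intro z hz
    rcases hmem z (List.mem_dedup.1 hz) with rfl | rfl <;> simpa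
  rw [hall] at hb
  -- The duplicate-free list `u.dedup` begins and ends with `a`, hence is `[a]` and misses `c`.
  have hlast := getLast?_dedup u
  have hnd := List.nodup_dedup u
  have hcd : c ∈ u.dedup := List.mem_dedup.2 hcu
  rw [ha] at hlast
  generalize u.dedup = d at *
  match d, hb with
  | [b], hb =>
    simp at hb hcd
    exact hac (hb.symm.trans hcd.symm)
  | b :: e :: t, hb =>
    have hba : b = a := by simpa using hb
    subst hba
    have : b ∈ e :: t := List.mem_of_getLast? (by simpa using hlast)
    exact (List.nodup_cons.1 hnd).1 this

theorem Represents.pad {V : Type*} [DecidableEq V] {G : SimpleGraph V} {k : ℕ} {w : List V}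
    (hw : Represents w G) : Represents (pad k w) G :=
  ⟨fun v => List.mem_append_left _ (hw.1 v), fun x y hxy =>
    (alternate_pad hxy (hw.1 x) (hw.1 y)).trans (hw.2 x y hxy)⟩

/-- A finite simple graph is word-representable iff it is `k`-representable for some
positive integer `k`. -/
theorem wordRepresentable_iff_kRepresentable {V : Type*} [Fintype V] [DecidableEq V]
    (G : SimpleGraph V) :
    WordRepresentable G ↔ ∃ k : ℕ, 0 < k ∧ KRepresentable G k := by
  constructor
  · rintro ⟨w, hw⟩
    -- The summand `1` keeps `k` positive when `V` is empty.
    refine ⟨w.length + 1, Nat.succ_pos _, ?_⟩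
    have key : ∀ n ≤ w.length + 1, ∃ u : List V, Represents u G ∧
        ∀ v, n ≤ u.count v ∧ u.count v ≤ w.length + 1 := by
      intro n
      induction n with
      | zero =>
        exact fun _ => ⟨w, hw, fun v => ⟨Nat.zero_le _, List.count_le_length.trans (Nat.le_succ _)⟩⟩
      | succ n ih =>
        intro hn
        obtain ⟨u, hu, hc⟩ := ih (by omega)
        refine ⟨pad (w.length + 1) u, hu.pad, fun v => ?_⟩
        rw [count_pad _ _ _ (hu.1 v)]
        have := hc v
        split_ifs <;> omega
    obtain ⟨u, hu, hc⟩ := key _ le_rfl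
    exact ⟨u, fun v => le_antisymm (hc v).2 (hc v).1, hu⟩
  · rintro ⟨k, _, w, _, hw⟩
    exact ⟨w, hw⟩
end

section
/- For every n ≥ 5, the representation number of the crown graph H_{n,n} equals ⌈n/2⌉. -/
/-- The crown graph `H_{n,n}`: bipartite with parts `{1,…,n}` and `{1',…,n'}`,
where `i` is adjacent to `j'` iff `i ≠ j`. -/
def crown (n : ℕ) : SimpleGraph (Fin n ⊕ Fin n) :=
  SimpleGraph.fromRel (fun a b =>
    match a, b with
    | Sum.inl i, Sum.inr j => i ≠ j
    | _, _ => False)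

/-! ### Alternation and prefix counts -/

/-- The number of occurrences of `x` in `l`. Equality tests come from `DecidableEq V` also when `V`
is a sum type, where `List.count` alone would pick the `BEq` instance of sums. -/
def occ {V : Type*} [DecidableEq V] (l : List V) (x : V) : ℕ := l.count x

theorem occ_pos_iff {V : Type*} [DecidableEq V] {l : List V} {x : V} : 0 < occ l x ↔ x ∈ l :=
  List.count_pos_iff

theorem occ_append {V : Type*} [DecidableEq V] (l l' : List V) (x : V) :
    occ (l ++ l') x = occ l x + occ l' x := List.count_append

theorem occ_nil {V : Type*} [DecidableEq V] (x : V) : occ ([] : List V) x = 0 := rfl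

theorem occ_map {V W : Type*} [DecidableEq V] [DecidableEq W] {f : V → W}
    (hf : Function.Injective f) (l : List V) (x : V) : occ (l.map f) (f x) = occ l x :=
  List.count_map_of_injective _ _ hf _

theorem occ_eq_zero {V : Type*} [DecidableEq V] {l : List V} {x : V} (h : x ∉ l) : occ l x = 0 :=
  List.count_eq_zero.2 h

theorem sum_occ {V : Type*} [DecidableEq V] [Fintype V] (l : List V) :
    ∑ x, occ l x = l.length := by
  have := Multiset.sum_count_eq_card (s := Finset.univ) (m := (l : Multiset V))
    (fun a _ => Finset.mem_univ a)
  simpa only [occ, Multiset.coe_count, Multiset.coe_card] using this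

/-- The difference between the numbers of occurrences of `x` and of `y` in the prefix of `w` of
length `p`. -/
def prefixDiff {V : Type*} [DecidableEq V] (w : List V) (x y : V) (p : ℕ) : ℤ :=
  (occ (w.take p) x : ℤ) - (occ (w.take p) y : ℤ)

/-- If `x` comes right before `w`, so that the next of the two letters has to be `y`, then `x` and `y`
alternate iff `prefixDiff` takes only the values `-1` and `0` on `w`. -/
theorem isChain_cons_filter_iff {V : Type*} [DecidableEq V] (w : List V) :
    ∀ x y : V, x ≠ y →
      ((x :: w.filter (fun z => decide (z = x ∨ z = y))).IsChain (· ≠ ·) ↔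
        ∀ p, -1 ≤ prefixDiff w x y p ∧ prefixDiff w x y p ≤ 0) := by
  induction w with
  | nil => intro x y _; simp [prefixDiff, occ]
  | cons z w ih =>
    intro x y hxy
    have hzero : prefixDiff w x y 0 = 0 := by simp [prefixDiff, occ]
    have hsplit : ∀ Q : ℤ → Prop, (∀ p, Q (prefixDiff (z :: w) x y p)) ↔
        Q 0 ∧ ∀ p, Q (((if z = x then 1 else 0) - (if z = y then 1 else 0)) +
          prefixDiff w x y p) := by
      intro Q
      have hs : ∀ p, prefixDiff (z :: w) x y (p + 1) =
          ((if z = x then 1 else 0) - (if z = y then 1 else 0)) + prefixDiff w x y p := by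
        intro p
        simp only [prefixDiff, occ, List.take_succ_cons, List.count_cons, beq_iff_eq]
        push_cast
        ring
      constructor
      · intro h
        exact ⟨by simpa [prefixDiff, occ] using h 0, fun p => hs p ▸ h (p + 1)⟩
      · rintro ⟨h0, h⟩ p
        cases p with
        | zero => simpa [prefixDiff, occ] using h0
        | succ p => rw [hs]; exact h p
    rw [hsplit (fun d => -1 ≤ d ∧ d ≤ 0)]
    by_cases hx : z = x
    · subst hx
      simp only [true_or, decide_true, List.filter_cons_of_pos, List.isChain_cons_cons,
        ne_eq, not_true_eq_false, false_and, if_true, hxy, if_false, false_iff, not_and, not_forall]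
      intro _
      exact ⟨0, by rw [hzero]; omega⟩
    · by_cases hy : z = y
      · subst hy
        have hsymm : (fun u => decide (u = x ∨ u = z)) = (fun u => decide (u = z ∨ u = x)) := by
          funext u; simp [or_comm]
        rw [hsymm, List.filter_cons_of_pos (by simp), List.isChain_cons_cons, ih z x hx]
        simp only [hx, if_false, if_true]
        have hneg : ∀ p, prefixDiff w z x p = - prefixDiff w x z p := by
          intro p; simp [prefixDiff]
        simp only [hneg]
        constructor
        · rintro ⟨-, h⟩
          exact ⟨by omega, fun p => by have := h p; omega⟩
        · rintro ⟨-, h⟩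
          exact ⟨hxy, fun p => by have := h p; omega⟩
      · have : (z :: w).filter (fun u => decide (u = x ∨ u = y)) =
            w.filter (fun u => decide (u = x ∨ u = y)) := by
          simp [hx, hy]
        rw [this, ih x y hxy]
        simp [hx, hy]

/-- Alternation in terms of prefix counts: `prefixDiff` has oscillation at most one. -/
theorem alternate_iff_prefixDiff {V : Type*} [DecidableEq V] (w : List V) (x y : V) (hxy : x ≠ y) :
    Alternate w x y ↔ ∃ a : ℤ, ∀ p, a ≤ prefixDiff w x y p ∧ prefixDiff w x y p ≤ a + 1 := by
  have hsymm : (fun u => decide (u = x ∨ u = y)) = (fun u => decide (u = y ∨ u = x)) := by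
    funext u; simp [or_comm]
  have hneg : ∀ p, prefixDiff w y x p = - prefixDiff w x y p := by
    intro p; simp [prefixDiff]
  have h1 := isChain_cons_filter_iff w x y hxy
  have h2 := isChain_cons_filter_iff w y x hxy.symm
  rw [← hsymm] at h2
  simp only [hneg] at h2
  have hmem : ∀ z ∈ w.filter (fun u => decide (u = x ∨ u = y)), z = x ∨ z = y := by
    intro z hz; simpa using (List.mem_filter.1 hz).2
  have key : Alternate w x y ↔
      ((x :: w.filter (fun z => decide (z = x ∨ z = y))).IsChain (· ≠ ·)) ∨
      ((y :: w.filter (fun z => decide (z = x ∨ z = y))).IsChain (· ≠ ·)) := by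
    unfold Alternate List.Chain'
    generalize w.filter (fun z => decide (z = x ∨ z = y)) = f at hmem
    cases f with
    | nil => simp
    | cons c f =>
      simp only [List.isChain_cons_cons]
      rcases hmem c (by simp) with rfl | rfl
      · simp [hxy.symm]
      · simp [hxy]
  rw [key, h1, h2]
  constructor
  · rintro (h | h)
    · exact ⟨-1, fun p => by have := h p; omega⟩
    · exact ⟨0, fun p => by have := h p; omega⟩
  · rintro ⟨a, h⟩
    have h0 := h 0
    have hzero : prefixDiff w x y 0 = 0 := by simp [prefixDiff, occ]
    rw [hzero] at h0
    obtain rfl | rfl : a = -1 ∨ a = 0 := by omega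
    · exact Or.inl fun p => by have := h p; omega
    · exact Or.inr fun p => by have := h p; omega

/-! ### The lower bound -/

/-- The counting argument behind the lower bound, for abstract counters `u i` and `v i` of the
letters `i` and `i'`. Beyond position `2nk`, the length of the word, the counters stay at `k`. -/
theorem crown_lower_aux (n k : ℕ) (hn : 4 ≤ n) (hk : 0 < k) (u v : Fin n → ℕ → ℤ)
    (hu0 : ∀ i, u i 0 = 0) (hv0 : ∀ i, v i 0 = 0)
    (huN : ∀ i p, 2 * n * k ≤ p → u i p = k) (hvN : ∀ i p, 2 * n * k ≤ p → v i p = k)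
    (hsum : ∀ p < 2 * n * k, ∑ i, u i p + ∑ i, v i p = p)
    (hadj : ∀ i j, i ≠ j → ∃ a : ℤ, ∀ p, a ≤ u i p - v j p ∧ u i p - v j p ≤ a + 1)
    (hA : ∀ i j, i ≠ j → ¬ ∃ a : ℤ, ∀ p, a ≤ u i p - u j p ∧ u i p - u j p ≤ a + 1)
    (hD : ∀ i, ¬ ∃ a : ℤ, ∀ p, a ≤ u i p - v i p ∧ u i p - v i p ≤ a + 1) :
    n ≤ 2 * k := by
  have hfresh : ∀ i j l : Fin n, ∃ m, m ≠ i ∧ m ≠ j ∧ m ≠ l := by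
    intro i j l
    have hc : ({i, j, l} : Finset (Fin n)).card < (Finset.univ : Finset (Fin n)).card := by
      have := Finset.card_le_three (a := i) (b := j) (c := l)
      simp only [Finset.card_univ, Fintype.card_fin]
      omega
    obtain ⟨m, -, hm⟩ := Finset.exists_mem_notMem_of_card_lt_card hc
    simp only [Finset.mem_insert, Finset.mem_singleton, not_or] at hm
    exact ⟨m, hm⟩
  choose! a ha using hadj
  -- otherwise `u i - u l` would be confined to two consecutive values
  have hcons : ∀ i l j m, i ≠ l → i ≠ j → l ≠ j → i ≠ m → l ≠ m →
      a i j - a l j ≤ a i m - a l m := by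
    intro i l j m hil hij hlj him hlm
    by_contra hlt
    refine hA i l hil ⟨a i j - a l j - 1, fun p => ?_⟩
    have h1 := ha i j hij p
    have h2 := ha l j hlj p
    have h3 := ha i m him p
    have h4 := ha l m hlm p
    omega
  obtain ⟨s, b, hsb⟩ : ∃ s b : Fin n → ℤ, ∀ i j, i ≠ j → a i j = s i + b j := by
    let z : Fin n := ⟨0, by omega⟩
    choose m hm using fun i => hfresh i z z
    choose o ho using fun j => hfresh j j j
    have hind : ∀ i l j, i ≠ j → l ≠ j →
        a i j - (a i (m i) - a z (m i)) = a l j - (a l (m l) - a z (m l)) := by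
      intro i l j hij hlj
      by_cases hil : i = l
      · rw [hil]
      obtain ⟨r, hri, hrl, hrz⟩ := hfresh i l z
      have e0 := hcons i l j r hil hij hlj hri.symm hrl.symm
      have e0' := hcons i l r j hil hri.symm hrl.symm hij hlj
      have e : ∀ i', r ≠ i' → a i' (m i') - a z (m i') = a i' r - a z r := by
        intro i' hr
        by_cases hz : i' = z
        · rw [hz]; ring
        exact le_antisymm
          (hcons i' z _ r hz (hm i').1.symm (hm i').2.1.symm hr.symm hrz.symm)
          (hcons i' z r _ hz hr.symm hrz.symm (hm i').1.symm (hm i').2.1.symm)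
      have e1 := e i hri
      have e2 := e l hrl
      omega
    refine ⟨fun i => a i (m i) - a z (m i),
      fun j => a (o j) j - (a (o j) (m (o j)) - a z (m (o j))), fun i j hij => ?_⟩
    have := hind i (o j) j hij (ho j).1
    dsimp only
    omega
  -- the sum of all normalised counters at position `p` is `p + C`
  set C : ℤ := -∑ i, s i + ∑ i, b i with hC
  have hN : 0 < 2 * n * k := by positivity
  -- the critical position `p` of `i`, its level `L`, and the normalised counters there
  have hmain : ∀ i, ∃ p < 2 * n * k, ∃ L t : ℤ, (n : ℤ) * L = p + C ∧
      ((L = 2 * t ∧ ∀ j, u j p - s j = t + if j = i then 1 else 0) ∨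
       (L = 2 * t + 1 ∧ ∀ j, u j p - s j = t + 1 - if j = i then 1 else 0)) := by
    intro i
    obtain ⟨p, hp, hbad⟩ : ∃ p < 2 * n * k,
        ¬ (s i + b i ≤ u i p - v i p ∧ u i p - v i p ≤ s i + b i + 1) := by
      by_contra! hcon
      refine hD i ⟨s i + b i, fun p => ?_⟩
      rcases lt_or_ge p (2 * n * k) with h | h
      · exact hcon p h
      · -- at the end of the word the difference is `k - k = 0`, as at the start
        have := hcon 0 hN
        rw [hu0, hv0] at this
        rw [huN i p h, hvN i p h]
        omega
    have hrel : ∀ j l, j ≠ l → s j + b l ≤ u j p - v l p ∧ u j p - v l p ≤ s j + b l + 1 := by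
      intro j l hjl
      rw [← hsb j l hjl]
      exact ha j l hjl p
    have hS : ∑ j, (u j p - s j) + ∑ j, (v j p + b j) = p + C := by
      rw [Finset.sum_sub_distrib, Finset.sum_add_distrib, hC, ← hsum p hp]
      ring
    refine ⟨p, hp, ?_⟩
    rcases lt_or_ge (u i p - v i p) (s i + b i) with hlow | hge
    · set t : ℤ := u i p - s i with ht
      have hU : ∀ j, u j p - s j = t + 1 - if j = i then 1 else 0 := by
        intro j
        split_ifs with hj
        · rw [hj]; ring
        · obtain ⟨l, hl1, hl2, -⟩ := hfresh i j j
          have h1 := hrel i l hl1.symm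
          have h2 := hrel j l hl2.symm
          have h3 := hrel j i hj
          omega
      have hW : ∀ j, v j p + b j = t + if j = i then 1 else 0 := by
        intro j
        split_ifs with hj
        · subst hj
          obtain ⟨l, hl1, -, -⟩ := hfresh j j j
          have h1 := hU l
          rw [if_neg hl1] at h1
          have h3 := hrel l j hl1
          omega
        · obtain ⟨l, hl1, hl2, -⟩ := hfresh i j j
          have h1 := hU l
          rw [if_neg hl1] at h1
          have h2 := hrel l j hl2
          have h3 := hrel i j (Ne.symm hj)
          omega
      refine ⟨2 * t + 1, t, ?_, Or.inr ⟨rfl, hU⟩⟩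
      rw [← hS, Finset.sum_congr rfl fun j _ => hU j, Finset.sum_congr rfl fun j _ => hW j]
      simp [Finset.sum_add_distrib, Finset.sum_sub_distrib]
      ring
    · have hhigh : s i + b i + 2 ≤ u i p - v i p := by omega
      set t : ℤ := u i p - s i - 1 with ht
      have hU : ∀ j, u j p - s j = t + if j = i then 1 else 0 := by
        intro j
        split_ifs with hj
        · rw [hj]; ring
        · obtain ⟨l, hl1, hl2, -⟩ := hfresh i j j
          have h1 := hrel i l hl1.symm
          have h2 := hrel j l hl2.symm
          have h3 := hrel j i hj
          omega
      have hW : ∀ j, v j p + b j = t - if j = i then 1 else 0 := by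
        intro j
        split_ifs with hj
        · subst hj
          obtain ⟨l, hl1, -, -⟩ := hfresh j j j
          have h1 := hU l
          rw [if_neg hl1] at h1
          have h3 := hrel l j hl1
          omega
        · obtain ⟨l, hl1, hl2, -⟩ := hfresh i j j
          have h1 := hU l
          rw [if_neg hl1] at h1
          have h2 := hrel l j hl2
          have h3 := hrel i j (Ne.symm hj)
          omega
      refine ⟨2 * t, t, ?_, Or.inl ⟨rfl, hU⟩⟩
      rw [← hS, Finset.sum_congr rfl fun j _ => hU j, Finset.sum_congr rfl fun j _ => hW j]
      simp [Finset.sum_add_distrib, Finset.sum_sub_distrib]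
      ring
  choose p hp L t hL hcase using hmain
  have hk2 : (0 : ℤ) < 2 * k := by positivity
  have hLinj : ∀ i j, L i = L j → i = j := by
    intro i j hij
    by_contra hne
    have hpp : p i = p j := by
      have h1 := hL i
      have h2 := hL j
      rw [hij] at h1
      omega
    rcases hcase i with ⟨h1, h2⟩ | ⟨h1, h2⟩ <;> rcases hcase j with ⟨h3, h4⟩ | ⟨h3, h4⟩
    all_goals
      have h5 := h2 i
      have h6 := h4 i
      rw [if_pos rfl, hpp] at h5
      rw [if_neg hne] at h6
      omega
  let F : Fin n → Fin (2 * k) := fun i => ⟨(L i % (2 * k)).toNat, by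
    have h1 := Int.emod_nonneg (L i) hk2.ne'
    have h2 := Int.emod_lt_of_pos (L i) hk2
    omega⟩
  have hF : Function.Injective F := by
    intro i j hij
    apply hLinj
    have h0 : L i % (2 * k) = L j % (2 * k) := by
      have := congrArg Fin.val hij
      have h1 := Int.emod_nonneg (L i) hk2.ne'
      have h2 := Int.emod_nonneg (L j) hk2.ne'
      simp only [F] at this
      omega
    obtain ⟨c, hc⟩ := Int.ModEq.dvd (show L i ≡ L j [ZMOD (2 * k)] from h0)
    -- the levels lie in an interval of length `2k`, since the positions lie in `[0, 2nk)`
    have hlt : ∀ i j, L j - L i < 2 * k := by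
      intro i j
      have h1 := hL i
      have h2 := hL j
      have h3 : (p j : ℤ) < n * (2 * k) := by
        have := hp j
        have h4 : ((p j : ℕ) : ℤ) < ((2 * n * k : ℕ) : ℤ) := by exact_mod_cast this
        push_cast at h4
        linarith
      have h5 : (n : ℤ) * (L j - L i) < n * (2 * k) := by
        have : (0 : ℤ) ≤ p i := by positivity
        linarith
      exact lt_of_mul_lt_mul_left h5 (by positivity)
    have h1 := hlt i j
    have h2 := hlt j i
    have hc1 : c < 1 := by
      by_contra h
      nlinarith
    have hc2 : -1 < c := by
      by_contra h
      nlinarith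
    obtain rfl : c = 0 := by omega
    omega
  simpa using Fintype.card_le_of_injective F hF

theorem crown_adj_inl_inr {n : ℕ} (i j : Fin n) :
    (crown n).Adj (Sum.inl i) (Sum.inr j) ↔ i ≠ j := by
  simp [crown]

theorem crown_adj_inl_inl {n : ℕ} (i j : Fin n) :
    ¬ (crown n).Adj (Sum.inl i) (Sum.inl j) := by
  simp [crown]

theorem crown_adj_inr_inr {n : ℕ} (i j : Fin n) :
    ¬ (crown n).Adj (Sum.inr i) (Sum.inr j) := by
  simp [crown]

theorem crown_lower (n k : ℕ) (hn : 4 ≤ n) (h : KRepresentable (crown n) k) : n ≤ 2 * k := by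
  obtain ⟨w, hcount, hmem, hrep⟩ := h
  replace hcount : ∀ x, occ w x = k := hcount
  have hk : 0 < k := by
    rw [← hcount (Sum.inl ⟨0, by omega⟩)]
    exact occ_pos_iff.2 (hmem _)
  have hsumcount : ∀ l : List (Fin n ⊕ Fin n),
      ∑ i, occ l (Sum.inl i) + ∑ i, occ l (Sum.inr i) = l.length := by
    intro l
    rw [← Fintype.sum_sum_type (fun x => occ l x), sum_occ]
  have hlen : w.length = 2 * n * k := by
    rw [← hsumcount w]
    simp only [hcount, Finset.sum_const, Finset.card_univ, Fintype.card_fin, smul_eq_mul]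
    ring
  refine crown_lower_aux n k hn hk (fun i p => (occ (w.take p) (Sum.inl i) : ℤ))
    (fun i p => (occ (w.take p) (Sum.inr i) : ℤ)) (by simp [occ]) (by simp [occ]) ?_ ?_ ?_ ?_ ?_ ?_
  · intro i p hp
    simp only [List.take_of_length_le (hlen.trans_le hp), hcount]
  · intro i p hp
    simp only [List.take_of_length_le (hlen.trans_le hp), hcount]
  · intro p hp
    have := hsumcount (w.take p)
    rw [List.length_take, min_eq_left (by omega)] at this
    exact_mod_cast this
  · intro i j hij
    exact (alternate_iff_prefixDiff w _ _ (by simp)).1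
      ((hrep (Sum.inl i) (Sum.inr j) (by simp)).2 ((crown_adj_inl_inr i j).2 hij))
  · intro i j hij hcon
    have hne : (Sum.inl i : Fin n ⊕ Fin n) ≠ Sum.inl j := by simpa using hij
    exact crown_adj_inl_inl i j ((hrep _ _ hne).1 ((alternate_iff_prefixDiff w _ _ hne).2 hcon))
  · intro i hcon
    have hne : (Sum.inl i : Fin n ⊕ Fin n) ≠ Sum.inr i := by simp
    exact (crown_adj_inl_inr i i).1
      ((hrep _ _ hne).1 ((alternate_iff_prefixDiff w _ _ hne).2 hcon)) rfl

/-! ### The word for the upper bound -/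

/-- The letters `i : Fin n` satisfying `P`, in increasing order. -/
def part (n : ℕ) (P : ℕ → Prop) [DecidablePred P] : List (Fin n) :=
  (List.finRange n).filter (fun i => decide (P i))

/-- The pieces of the `t`-th block, `t < k`, where `n ≤ 2 * k`. With `e = t`, `g = k + t` and `h` the
letter `g` of the cyclically preceding block (`k + t - 1`, or `2 * k - 1` if `t = 0`), the block reads
`A \ {e, h}`, `e'`, `e`, `B \ {e', g'}`, `g`, `g'`. In `A \ {e, h}` the letters below `k` come first,
in `B \ {e', g'}` they come last. Letters not less than `n` are absent. -/
def pieces (n k t : ℕ) : List (List (Fin n ⊕ Fin n)) :=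
  [(part n (fun i => i < k ∧ i ≠ t)).map Sum.inl,
   (part n (fun i => k ≤ i ∧ i + 1 ≠ k + t ∧ i + 1 ≠ 2 * k + t)).map Sum.inl,
   (part n (fun i => i = t)).map Sum.inr,
   (part n (fun i => i = t)).map Sum.inl,
   (part n (fun i => k ≤ i ∧ i ≠ k + t)).map Sum.inr,
   (part n (fun i => i < k ∧ i ≠ t)).map Sum.inr,
   (part n (fun i => i = k + t)).map Sum.inl,
   (part n (fun i => i = k + t)).map Sum.inr]

/-- The concatenation of the first `t` blocks. -/
def crownBlocks (n k t : ℕ) : List (Fin n ⊕ Fin n) :=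
  (List.range t).flatMap (fun s => (pieces n k s).flatten)

theorem crownBlocks_succ (n k t : ℕ) :
    crownBlocks n k (t + 1) = crownBlocks n k t ++ (pieces n k t).flatten := by
  simp [crownBlocks, List.range_succ]

/-- The concatenation of the first `t` blocks and the first `m` pieces of the next one. -/
def crownPrefix (n k t m : ℕ) : List (Fin n ⊕ Fin n) :=
  crownBlocks n k t ++ ((pieces n k t).take m).flatten

/-- The `k`-uniform word representing the crown graph. -/
def crownWord (n k : ℕ) : List (Fin n ⊕ Fin n) :=
  crownBlocks n k k

theorem crownPrefix_isPrefix (n k t m : ℕ) (ht : t < k) :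
    crownPrefix n k t m <+: crownWord n k := by
  obtain ⟨d, rfl⟩ : ∃ d, k = t + 1 + d := ⟨k - (t + 1), by omega⟩
  unfold crownPrefix crownWord
  have hblocks : ∀ K, crownBlocks n K (t + 1) <+: crownBlocks n K (t + 1 + d) := by
    intro K
    unfold crownBlocks
    rw [List.range_add (n := t + 1) (m := d), List.flatMap_append]
    exact List.prefix_append _ _
  refine List.IsPrefix.trans ?_ (hblocks _)
  rw [crownBlocks_succ, List.prefix_append_right_inj]
  nth_rw 2 [← List.take_append_drop m (pieces n (t + 1 + d) t)]
  rw [List.flatten_append]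
  exact List.prefix_append _ _

theorem occ_part {n : ℕ} (P : ℕ → Prop) [DecidablePred P] (i : Fin n) :
    occ (part n P) i = if P i then 1 else 0 := by
  unfold occ part
  rw [List.Nodup.count ((List.nodup_finRange n).filter _)]
  simp

theorem occ_inl_inl {n : ℕ} (l : List (Fin n)) (i : Fin n) :
    occ (l.map (Sum.inl : Fin n → Fin n ⊕ Fin n)) (Sum.inl i) = occ l i :=
  occ_map Sum.inl_injective l i

theorem occ_inr_inr {n : ℕ} (l : List (Fin n)) (i : Fin n) :
    occ (l.map (Sum.inr : Fin n → Fin n ⊕ Fin n)) (Sum.inr i) = occ l i :=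
  occ_map Sum.inr_injective l i

theorem occ_inl_inr {n : ℕ} (l : List (Fin n)) (i : Fin n) :
    occ (l.map (Sum.inl : Fin n → Fin n ⊕ Fin n)) (Sum.inr i) = 0 :=
  occ_eq_zero (by simp)

theorem occ_inr_inl {n : ℕ} (l : List (Fin n)) (i : Fin n) :
    occ (l.map (Sum.inr : Fin n → Fin n ⊕ Fin n)) (Sum.inl i) = 0 :=
  occ_eq_zero (by simp)

/-- After `t` blocks each unprimed letter has occurred `t` times, except that the last letter of the
`t`-th block is one ahead. The letter `2 * k - 1` lags by one occurrence throughout, since it is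
skipped in the first block. -/
theorem occ_blocks_inl (n k t : ℕ) (hn : n ≤ 2 * k) (i : Fin n) (ht : t ≤ k) :
    occ (crownBlocks n k t) (Sum.inl i) +
      (if (i : ℕ) + 1 = 2 * k then 1 else 0) =
    t + if k ≤ (i : ℕ) ∧ ((i : ℕ) + 1 = k + t ∨ (i : ℕ) + 1 = 2 * k + t) then 1 else 0 := by
  have hi := i.2
  induction t with
  | zero =>
    simp only [crownBlocks, List.range_zero, List.flatMap_nil, occ_nil]
    split_ifs <;> omega
  | succ t ih =>
    have := ih (by omega)
    rw [crownBlocks_succ]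
    simp only [pieces, List.flatten_cons, List.flatten_nil, occ_append, occ_nil, occ_inl_inl,
      occ_inr_inl, occ_part]
    grind

theorem occ_blocks_inr (n k t : ℕ) (hn : n ≤ 2 * k) (i : Fin n) (ht : t ≤ k) :
    occ (crownBlocks n k t) (Sum.inr i) = t := by
  have hi := i.2
  induction t with
  | zero => simp only [crownBlocks, List.range_zero, List.flatMap_nil, occ_nil]
  | succ t ih =>
    have := ih (by omega)
    rw [crownBlocks_succ]
    simp only [pieces, List.flatten_cons, List.flatten_nil, occ_append, occ_nil, occ_inl_inr,
      occ_inr_inr, occ_part]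
    grind

theorem occ_crownWord (n k : ℕ) (hk : 0 < k) (hn : n ≤ 2 * k) (x : Fin n ⊕ Fin n) :
    occ (crownWord n k) x = k := by
  rcases x with i | i
  · have := occ_blocks_inl n k k hn i le_rfl
    have hi := i.2
    unfold crownWord
    grind
  · exact occ_blocks_inr n k k hn i le_rfl

/-- Two prefixes whose occurrence differences are at least two apart witness non-alternation. -/
theorem not_alternate_of_prefix {V : Type*} [DecidableEq V] {w l l' : List V} {x y : V}
    (hl : l <+: w) (hl' : l' <+: w) (h : occ l x + occ l' y + 2 ≤ occ l y + occ l' x)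
    (hxy : x ≠ y) : ¬ Alternate w x y := by
  rw [alternate_iff_prefixDiff w x y hxy]
  rintro ⟨a, ha⟩
  have h1 := ha l.length
  have h2 := ha l'.length
  rw [prefixDiff, ← List.prefix_iff_eq_take.1 hl] at h1
  rw [prefixDiff, ← List.prefix_iff_eq_take.1 hl'] at h2
  omega

theorem exists_third (k a b : ℕ) (hk : 3 ≤ k) : ∃ r < k, r ≠ a ∧ r ≠ b := by
  by_cases h0 : 0 ≠ a ∧ 0 ≠ b
  · exact ⟨0, by omega, h0⟩
  by_cases h1 : 1 ≠ a ∧ 1 ≠ b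
  · exact ⟨1, by omega, h1⟩
  exact ⟨2, by omega, by omega, by omega⟩

theorem not_alternate_inl_inl (n k : ℕ) (hk : 3 ≤ k) (hn : n ≤ 2 * k) (i j : Fin n) (hij : i < j) :
    ¬ Alternate (crownWord n k) (Sum.inl i) (Sum.inl j) := by
  have hi := i.2
  have hj := j.2
  have hlt : (i : ℕ) < j := hij
  have hne : (Sum.inl i : Fin n ⊕ Fin n) ≠ Sum.inl j := by simpa using hij.ne
  have bi := fun t ht => occ_blocks_inl n k t hn i ht
  have bj := fun t ht => occ_blocks_inl n k t hn j ht
  by_cases hjk : (j : ℕ) < k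
  -- a letter below `k` comes last among the unprimed letters in the block it indexes
  · refine not_alternate_of_prefix (crownPrefix_isPrefix n k i 2 (by omega))
      (crownPrefix_isPrefix n k j 2 (by omega)) ?_ hne
    have := bi i (by omega)
    have := bi j (by omega)
    have := bj i (by omega)
    have := bj j (by omega)
    simp only [crownPrefix, pieces, List.take_succ_cons, List.take_zero, List.flatten_cons,
      List.flatten_nil, occ_append, occ_nil, occ_inl_inl, occ_part]
    grind
  by_cases hik : (i : ℕ) < k
  -- `i` trails `j` in block `i`, but precedes it in a block `r` where both are in regular position;
  -- `j` is skipped in block `j + 1 - k`, taken modulo `k`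
  · obtain ⟨r, hr, hr1, hr2⟩ := exists_third k i (if (j : ℕ) + 1 = 2 * k then 0 else j + 1 - k) hk
    refine not_alternate_of_prefix (crownPrefix_isPrefix n k i 2 (by omega))
      (crownPrefix_isPrefix n k r 1 (by omega)) ?_ hne
    have := bi i (by omega)
    have := bi r (by omega)
    have := bj i (by omega)
    have := bj r (by omega)
    simp only [crownPrefix, pieces, List.take_succ_cons, List.take_zero, List.flatten_cons,
      List.flatten_nil, occ_append, occ_nil, occ_inl_inl, occ_part]
    grind
  -- the letter `k + a` is ahead of all the others after block `a`
  · obtain ⟨a, ha⟩ : ∃ a, (i : ℕ) = k + a := ⟨i - k, by omega⟩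
    obtain ⟨b, hb⟩ : ∃ b, (j : ℕ) = k + b := ⟨j - k, by omega⟩
    refine not_alternate_of_prefix (crownPrefix_isPrefix n k b 8 (by omega))
      (crownPrefix_isPrefix n k a 8 (by omega)) ?_ hne
    have := bi a (by omega)
    have := bi b (by omega)
    have := bj a (by omega)
    have := bj b (by omega)
    simp only [crownPrefix, pieces, List.take_succ_cons, List.take_zero, List.flatten_cons,
      List.flatten_nil, occ_append, occ_nil, occ_inl_inl, occ_inr_inl, occ_part]
    clear bi bj
    grind

theorem not_alternate_inr_inr (n k : ℕ) (hk : 3 ≤ k) (hn : n ≤ 2 * k) (i j : Fin n) (hij : i < j) :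
    ¬ Alternate (crownWord n k) (Sum.inr i) (Sum.inr j) := by
  have hi := i.2
  have hj := j.2
  have hlt : (i : ℕ) < j := hij
  have hne : (Sum.inr i : Fin n ⊕ Fin n) ≠ Sum.inr j := by simpa using hij.ne
  have bi := fun t ht => occ_blocks_inr n k t hn i ht
  have bj := fun t ht => occ_blocks_inr n k t hn j ht
  by_cases hjk : (j : ℕ) < k
  -- a letter below `k` comes first among the primed letters in the block it indexes
  · refine not_alternate_of_prefix (crownPrefix_isPrefix n k j 3 (by omega))
      (crownPrefix_isPrefix n k i 3 (by omega)) ?_ hne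
    have := bi i (by omega)
    have := bi j (by omega)
    have := bj i (by omega)
    have := bj j (by omega)
    simp only [crownPrefix, pieces, List.take_succ_cons, List.take_zero, List.flatten_cons,
      List.flatten_nil, occ_append, occ_nil, occ_inl_inr, occ_inr_inr, occ_part]
    grind
  by_cases hik : (i : ℕ) < k
  -- `i'` precedes `j'` in block `i`, but trails it in a block where neither is moved
  · obtain ⟨r, hr, hr1, hr2⟩ := exists_third k i (j - k) hk
    refine not_alternate_of_prefix (crownPrefix_isPrefix n k r 5 (by omega))
      (crownPrefix_isPrefix n k i 3 (by omega)) ?_ hne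
    have := bi i (by omega)
    have := bi r (by omega)
    have := bj i (by omega)
    have := bj r (by omega)
    simp only [crownPrefix, pieces, List.take_succ_cons, List.take_zero, List.flatten_cons,
      List.flatten_nil, occ_append, occ_nil, occ_inl_inr, occ_inr_inr, occ_part]
    grind
  -- the letter `(k + a)'` comes last in block `a`
  · refine not_alternate_of_prefix (crownPrefix_isPrefix n k (i - k) 7 (by omega))
      (crownPrefix_isPrefix n k (j - k) 7 (by omega)) ?_ hne
    have := bi (i - k) (by omega)
    have := bi (j - k) (by omega)
    have := bj (i - k) (by omega)
    have := bj (j - k) (by omega)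
    simp only [crownPrefix, pieces, List.take_succ_cons, List.take_zero, List.flatten_cons,
      List.flatten_nil, occ_append, occ_nil, occ_inl_inr, occ_inr_inr, occ_part]
    grind

theorem not_alternate_inl_inr (n k : ℕ) (hk : 3 ≤ k) (hn : n ≤ 2 * k) (i : Fin n) :
    ¬ Alternate (crownWord n k) (Sum.inl i) (Sum.inr i) := by
  have hi := i.2
  have hne : (Sum.inl i : Fin n ⊕ Fin n) ≠ Sum.inr i := by simp
  have bi := fun t ht => occ_blocks_inl n k t hn i ht
  have bj := fun t ht => occ_blocks_inr n k t hn i ht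
  by_cases hik : (i : ℕ) < k
  · obtain ⟨r, hr, hr1, -⟩ := exists_third k i i hk
    refine not_alternate_of_prefix (crownPrefix_isPrefix n k i 3 (by omega))
      (crownPrefix_isPrefix n k r 2 (by omega)) ?_ hne
    have := bi i (by omega)
    have := bi r (by omega)
    have := bj i (by omega)
    have := bj r (by omega)
    simp only [crownPrefix, pieces, List.take_succ_cons, List.take_zero, List.flatten_cons,
      List.flatten_nil, occ_append, occ_nil, occ_inl_inl, occ_inr_inl, occ_inl_inr, occ_inr_inr,
      occ_part]
    grind
  · obtain ⟨r, hr, hr1, hr2⟩ := exists_third k (i - k)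
      (if (i : ℕ) + 1 = 2 * k then 0 else i + 1 - k) hk
    refine not_alternate_of_prefix (crownPrefix_isPrefix n k r 0 (by omega))
      (crownPrefix_isPrefix n k (i - k) 7 (by omega)) ?_ hne
    have := bi (i - k) (by omega)
    have := bi r (by omega)
    have := bj (i - k) (by omega)
    have := bj r (by omega)
    simp only [crownPrefix, pieces, List.take_succ_cons, List.take_zero, List.flatten_cons,
      List.flatten_nil, occ_append, occ_nil, occ_inl_inl, occ_inr_inl, occ_inl_inr, occ_inr_inr,
      occ_part]
    grind

theorem filter_part_eq {n : ℕ} (P : ℕ → Prop) [DecidablePred P] (i : Fin n) :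
    (part n P).filter (fun z => decide (z = i)) = if P i then [i] else [] := by
  have h : (part n P).filter (fun z => decide (z = i)) = List.replicate (occ (part n P) i) i :=
    List.filter_eq _
  rw [h, occ_part]
  split_ifs <;> rfl

theorem filter_inl {n : ℕ} (P : ℕ → Prop) [DecidablePred P] (i j : Fin n) :
    ((part n P).map (Sum.inl : Fin n → Fin n ⊕ Fin n)).filter
      (fun z => decide (z = Sum.inl i ∨ z = Sum.inr j)) = if P i then [Sum.inl i] else [] := by
  have h := congrArg (List.map (Sum.inl : Fin n → Fin n ⊕ Fin n)) (filter_part_eq P i)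
  rw [List.filter_map]
  simp only [Function.comp_def, Sum.inl.injEq, reduceCtorEq, or_false, h]
  split_ifs <;> rfl

theorem filter_inr {n : ℕ} (P : ℕ → Prop) [DecidablePred P] (i j : Fin n) :
    ((part n P).map (Sum.inr : Fin n → Fin n ⊕ Fin n)).filter
      (fun z => decide (z = Sum.inl i ∨ z = Sum.inr j)) = if P j then [Sum.inr j] else [] := by
  have h := congrArg (List.map (Sum.inr : Fin n → Fin n ⊕ Fin n)) (filter_part_eq P j)
  rw [List.filter_map]
  simp only [Function.comp_def, Sum.inr.injEq, reduceCtorEq, false_or, h]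
  split_ifs <;> rfl

/-- The trace of the `t`-th block on the letters `i` and `j'` is `i j'`, except that `i` is doubled
at the end of the block for `i = k + t`, and then missing at the start of the next one. -/
theorem filter_block_s4 (n k t : ℕ) (hk : 2 ≤ k) (ht : t < k) (i j : Fin n)
    (hij : i ≠ j) :
    (pieces n k t).flatten.filter (fun z => decide (z = Sum.inl i ∨ z = Sum.inr j)) =
      if (i : ℕ) = k + t then [Sum.inl i, Sum.inr j, Sum.inl i]
      else if k ≤ (i : ℕ) ∧ ((i : ℕ) + 1 = k + t ∨ (i : ℕ) + 1 = 2 * k + t) then [Sum.inr j]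
      else [Sum.inl i, Sum.inr j] := by
  have hi := i.2
  have hj := j.2
  have hne : (i : ℕ) ≠ j := fun h => hij (Fin.ext h)
  simp only [pieces, List.flatten_cons, List.flatten_nil, List.append_nil, List.filter_append,
    filter_inl, filter_inr]
  by_cases h1 : (i : ℕ) = t
  · grind
  by_cases h2 : (i : ℕ) = k + t
  · grind
  by_cases h3 : (j : ℕ) = t
  · grind
  by_cases h4 : (j : ℕ) = k + t
  · grind
  grind

/-- Each block ends with `j'` and the next one starts with `i`, unless `i` was doubled, in which case
both are interchanged. -/
theorem alternate_crownWord (n k : ℕ) (hk : 2 ≤ k) (hn : n ≤ 2 * k) (i j : Fin n) (hij : i ≠ j) :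
    Alternate (crownWord n k) (Sum.inl i) (Sum.inr j) := by
  have hi := i.2
  unfold Alternate List.Chain' crownWord crownBlocks
  rw [List.filter_flatMap, List.flatMap_def]
  have hmem : ∀ l ∈ (List.range k).map (fun t => (pieces n k t).flatten.filter
      (fun z => decide (z = Sum.inl i ∨ z = Sum.inr j))),
      l ≠ [] ∧ l.IsChain (· ≠ ·) := by
    intro l hl
    obtain ⟨t, ht, rfl⟩ := List.mem_map.1 hl
    rw [filter_block_s4 n k t hk (List.mem_range.1 ht) i j hij]
    split_ifs <;> simp
  rw [List.isChain_flatten (fun h => (hmem _ h).1 rfl)]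
  refine ⟨fun l hl => (hmem l hl).2, ?_⟩
  rw [List.isChain_map]
  obtain ⟨k, rfl⟩ : ∃ k', k = k' + 1 := ⟨k - 1, by omega⟩
  rw [List.isChain_range_succ]
  intro t ht
  rw [filter_block_s4 n _ t hk (by omega) i j hij,
    filter_block_s4 n _ (t + 1) hk (by omega) i j hij]
  split_ifs <;> first | omega | simp

theorem crown_upper (n k : ℕ) (hk : 3 ≤ k) (hn : n ≤ 2 * k) : KRepresentable (crown n) k := by
  have hcount : ∀ x, occ (crownWord n k) x = k := occ_crownWord n k (by omega) hn
  refine ⟨crownWord n k, hcount, fun x => ?_, ?_⟩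
  · rw [← occ_pos_iff, hcount]
    omega
  · rintro (i | i) (j | j) hxy
    · have hij : i ≠ j := fun h => hxy (by rw [h])
      refine iff_of_false ?_ (crown_adj_inl_inl i j)
      rcases lt_or_gt_of_ne hij with h | h
      · exact not_alternate_inl_inl n k hk hn i j h
      · rw [alternate_comm]
        exact not_alternate_inl_inl n k hk hn j i h
    · rw [crown_adj_inl_inr]
      refine ⟨?_, alternate_crownWord n k (by omega) hn i j⟩
      rintro h rfl
      exact not_alternate_inl_inr n k hk hn i h
    · rw [SimpleGraph.adj_comm, alternate_comm, crown_adj_inl_inr]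
      refine ⟨?_, alternate_crownWord n k (by omega) hn j i⟩
      rintro h rfl
      exact not_alternate_inl_inr n k hk hn _ h
    · have hij : i ≠ j := fun h => hxy (by rw [h])
      refine iff_of_false ?_ (crown_adj_inr_inr i j)
      rcases lt_or_gt_of_ne hij with h | h
      · exact not_alternate_inr_inr n k hk hn i j h
      · rw [alternate_comm]
        exact not_alternate_inr_inr n k hk hn j i h

/-- For `n ≥ 5`, the representation number of the crown graph `H_{n,n}` equals
`⌈n/2⌉ = (n+1)/2`: it is the least `k` such that `H_{n,n}` is `k`-representable. -/
theorem repNum_crown (n : ℕ) (hn : 5 ≤ n) :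
    IsLeast {k : ℕ | KRepresentable (crown n) k} ((n + 1) / 2) := by
  refine ⟨crown_upper n _ (by omega) (by omega), fun k hk => ?_⟩
  have := crown_lower n k (by omega) hk
  omega
end
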